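/- arXiv:1502.05030 — 2 statements merged into one kernel-verified Lean document; each statement's English description precedes it below -/
import Mathlib

section
/- Let x ∈ [-1,1], X = {x}, and suppose t = arccos(x)/(2π) is rational, say t = p/q with p, q coprime nonnegative integers and q odd. Then the supremum of λ(I) over all Lebesgue measurable X-avoiding subsets I of the unit circle S^1 equals (q-1)/(2q), and this supremum is attained: there exists a measurable X-avoiding set I ⊆ S^1 with λ(I) = (q-1)/(2q). -/
open MeasureTheory Metric Matrix Filter
open scoped RealInnerProductSpace ENNReal

noncomputable section

/-- `ℝ^n` as a Euclidean space. -/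
abbrev Eucl (n : ℕ) : Type := EuclideanSpace ℝ (Fin n)

/-- The unit sphere `S^{n-1}` in `ℝ^n`. -/
abbrev Sph (n : ℕ) := Metric.sphere (0 : Eucl n) 1

/-- The Lebesgue surface measure on the unit sphere `S^{n-1}`, normalised so that the
total measure of the sphere is `1`. -/
def sphMeasure (n : ℕ) : Measure (Sph n) :=
  (((volume : Measure (Eucl n)).toSphere) Set.univ)⁻¹ • (volume : Measure (Eucl n)).toSphere

/-- A subset `I` of the sphere is `X`-avoiding if `⟪ξ, η⟫ ∉ X` for all `ξ, η ∈ I`. -/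
def Avoids {n : ℕ} (X : Set ℝ) (I : Set (Sph n)) : Prop :=
  ∀ ξ ∈ I, ∀ η ∈ I, ⟪(ξ : Eucl n), (η : Eucl n)⟫ ∉ X

lemma odd_count (n : ℕ) (f : ℕ → ℕ) (h : ∀ k, f k + f (k + 1) ≤ 1)
    (hper : f (2 * n + 1) = f 0) : ∑ k ∈ Finset.range (2 * n + 1), f k ≤ n := by
  have h1 : ∑ k ∈ Finset.range (2 * n + 1), (f k + f (k + 1)) ≤
      ∑ k ∈ Finset.range (2 * n + 1), 1 := Finset.sum_le_sum fun k _ => h k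
  rw [Finset.sum_add_distrib] at h1
  have h2 := Finset.sum_range_succ f (2 * n + 1)
  have h3 := Finset.sum_range_succ' f (2 * n + 1)
  simp at h1
  omega

lemma upper_abs {Ω : Type*} [MeasurableSpace Ω] (μ : Measure Ω) [IsProbabilityMeasure μ]
    (R : Ω → Ω) (hR : MeasurePreserving R μ μ) (n : ℕ) (hper : ∀ ω, R^[2 * n + 1] ω = ω)
    (I : Set Ω) (hI : MeasurableSet I) (hav : ∀ ω ∈ I, R ω ∉ I) :
    ((2 * n + 1 : ℕ) : ℝ≥0∞) * μ I ≤ n := by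
  classical
  have key : ∀ k, μ I = ∫⁻ ω, (((if R^[k] ω ∈ I then 1 else 0 : ℕ)) : ℝ≥0∞) ∂μ := by
    intro k
    have hk := hR.iterate k
    rw [← hk.measure_preimage hI.nullMeasurableSet, ← lintegral_indicator_one (hk.measurable hI)]
    congr 1
    ext ω
    by_cases hω : R^[k] ω ∈ I <;> simp [Set.indicator, hω]
  have hm : ∀ k, Measurable fun ω => (((if R^[k] ω ∈ I then 1 else 0 : ℕ)) : ℝ≥0∞) := by
    intro k
    have hk := (hR.iterate k).measurable
    push_cast
    exact Measurable.ite (hk hI) measurable_const measurable_const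
  calc ((2 * n + 1 : ℕ) : ℝ≥0∞) * μ I = ∑ k ∈ Finset.range (2 * n + 1), μ I := by simp
    _ = ∑ k ∈ Finset.range (2 * n + 1),
        ∫⁻ ω, (((if R^[k] ω ∈ I then 1 else 0 : ℕ)) : ℝ≥0∞) ∂μ :=
        Finset.sum_congr rfl fun k _ => key k
    _ = ∫⁻ ω, ∑ k ∈ Finset.range (2 * n + 1),
        (((if R^[k] ω ∈ I then 1 else 0 : ℕ)) : ℝ≥0∞) ∂μ :=
        (lintegral_finsetSum _ fun k _ => hm k).symm
    _ ≤ ∫⁻ ω, (n : ℝ≥0∞) ∂μ := by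
        apply lintegral_mono
        intro ω
        have := odd_count n (fun k => if R^[k] ω ∈ I then 1 else 0) (by
          intro k
          simp only [Function.iterate_succ_apply']
          have := hav (R^[k] ω)
          split_ifs <;> simp_all) (by
            show (if R^[2 * n + 1] ω ∈ I then 1 else 0) = (if ω ∈ I then 1 else 0)
            rw [hper])
        show ∑ k ∈ Finset.range (2 * n + 1),
          (((if R^[k] ω ∈ I then 1 else 0 : ℕ)) : ℝ≥0∞) ≤ (n : ℝ≥0∞)
        exact_mod_cast this
    _ = n := by simp

lemma val_odd (n : ℕ) (a b : ZMod (2 * n + 1)) (i j : ℕ) (hi : i < n) (hj : j < n)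
    (ha : a = ((2 * i : ℕ) : ZMod (2 * n + 1))) (hb : b = ((2 * j : ℕ) : ZMod (2 * n + 1)))
    (h : b = a + 1) : False := by
  subst ha hb
  have h' : ((2 * j : ℕ) : ZMod (2 * n + 1)) = ((2 * i + 1 : ℕ) : ZMod (2 * n + 1)) := by
    rw [h]; push_cast; ring
  rw [ZMod.natCast_eq_natCast_iff'] at h'
  rw [Nat.mod_eq_of_lt (by omega), Nat.mod_eq_of_lt (by omega)] at h'
  omega

lemma lower_abs {Ω : Type*} [MeasurableSpace Ω] (μ : Measure Ω) [IsProbabilityMeasure μ]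
    (R : Ω → Ω) (hR : MeasurePreserving R μ μ) (n : ℕ) (J : Ω → ZMod (2 * n + 1))
    (hJm : ∀ a, MeasurableSet (J ⁻¹' {a})) (hJ : ∀ ω, J (R ω) = J ω + 1) :
    ∃ I : Set Ω, MeasurableSet I ∧ (∀ ω ∈ I, R ω ∉ I) ∧
      ((2 * n + 1 : ℕ) : ℝ≥0∞) * μ I = n := by
  classical
  have h1 : ∀ a, μ (J ⁻¹' {a + 1}) = μ (J ⁻¹' {a}) := by
    intro a
    rw [← hR.measure_preimage (hJm _).nullMeasurableSet]
    congr 1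
    ext ω
    simp [hJ]
  have h2 : ∀ k : ℕ, μ (J ⁻¹' {(k : ZMod (2 * n + 1))}) = μ (J ⁻¹' {0}) := by
    intro k
    induction k with
    | zero => simp
    | succ k ih => rw [Nat.cast_succ, h1, ih]
  have h3 : ∀ a, μ (J ⁻¹' {a}) = μ (J ⁻¹' {0}) := by
    intro a
    rw [← ZMod.natCast_zmod_val a, h2]
  have h4 : ((2 * n + 1 : ℕ) : ℝ≥0∞) * μ (J ⁻¹' {0}) = 1 := by
    have hu : (⋃ a ∈ (Finset.univ : Finset (ZMod (2 * n + 1))), J ⁻¹' {a}) = Set.univ := by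
      ext ω; simp
    have := measure_biUnion_finset (μ := μ) (s := (Finset.univ : Finset (ZMod (2 * n + 1))))
      (f := fun a => J ⁻¹' {a})
      (fun a _ b _ hab => Disjoint.preimage _ (by simpa using hab)) (fun a _ => hJm a)
    rw [hu, measure_univ] at this
    rw [this]
    simp [h3, ZMod.card]
  refine ⟨⋃ i ∈ Finset.range n, J ⁻¹' {((2 * i : ℕ) : ZMod (2 * n + 1))}, ?_, ?_, ?_⟩
  · exact Finset.measurableSet_biUnion _ fun i _ => hJm _
  · intro ω hω hω'
    simp only [Finset.mem_range, Set.mem_iUnion, Set.mem_preimage, Set.mem_singleton_iff,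
      exists_prop] at hω hω'
    obtain ⟨i, hi, ha⟩ := hω
    obtain ⟨j, hj, hb⟩ := hω'
    exact val_odd n _ _ i j hi hj ha hb (hJ ω)
  · rw [measure_biUnion_finset _ fun i _ => hJm _]
    · rw [Finset.sum_congr rfl fun i _ => h2 _, Finset.sum_const, Finset.card_range, nsmul_eq_mul,
        mul_left_comm, h4, mul_one]
    · intro i hi j hj hij
      refine Disjoint.preimage _ ?_
      rw [Set.disjoint_singleton]
      intro h
      rw [ZMod.natCast_eq_natCast_iff'] at h
      simp only [Finset.coe_range, Set.mem_Iio] at hi hj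
      rw [Nat.mod_eq_of_lt (by omega), Nat.mod_eq_of_lt (by omega)] at h
      omega

instance sphMeasure_prob : IsProbabilityMeasure (sphMeasure 2) := by
  constructor
  rw [sphMeasure, Measure.smul_apply, smul_eq_mul]
  apply ENNReal.inv_mul_cancel
  · rw [Ne, Measure.measure_univ_eq_zero]
    exact Measure.toSphere_ne_zero _
  · exact measure_ne_top _ _

/-- A linear isometry acting on the circle. -/
def sphMap (L : Eucl 2 ≃ₗᵢ[ℝ] Eucl 2) (ξ : Sph 2) : Sph 2 := ⟨L ξ, by simp⟩

open scoped Pointwise in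
lemma sphMap_mp (L : Eucl 2 ≃ₗᵢ[ℝ] Eucl 2) :
    MeasurePreserving (sphMap L) (sphMeasure 2) (sphMeasure 2) := by
  have hc : Continuous (sphMap L) :=
    Continuous.subtype_mk (L.continuous.comp continuous_subtype_val) _
  have hm : Measurable (sphMap L) := hc.measurable
  have h : MeasurePreserving (sphMap L) (volume : Measure (Eucl 2)).toSphere
      (volume : Measure (Eucl 2)).toSphere := by
    refine ⟨hm, ?_⟩
    ext s hs
    rw [Measure.map_apply hm hs, Measure.toSphere_apply' _ hs, Measure.toSphere_apply' _ (hm hs)]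
    congr 1
    rw [← L.measurePreserving.measure_preimage_emb L.toHomeomorph.measurableEmbedding
      (Set.Ioo (0 : ℝ) 1 • (Subtype.val '' s))]
    congr 1
    ext v
    simp only [Set.mem_smul, Set.mem_preimage, Set.mem_image]
    constructor
    · rintro ⟨r, hr, _, ⟨ξ, hξ, rfl⟩, rfl⟩
      exact ⟨r, hr, _, ⟨_, hξ, rfl⟩, by simp [sphMap]⟩
    · rintro ⟨r, hr, _, ⟨ξ, hξ, rfl⟩, h⟩
      refine ⟨r, hr, _, ⟨sphMap L.symm ξ, ?_, rfl⟩, ?_⟩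
      · have : sphMap L (sphMap L.symm ξ) = ξ := by ext1; simp [sphMap]
        rwa [this]
      · apply L.injective
        rw [← h]; simp [sphMap]
  exact h.smul_measure _

/-- Identification of the plane with the complex numbers. -/
def toC : Eucl 2 ≃ₗᵢ[ℝ] ℂ := Complex.orthonormalBasisOneI.repr.symm

/-- Rotation by `a`. -/
def rotE (a : Circle) : Eucl 2 ≃ₗᵢ[ℝ] Eucl 2 := (toC.trans (rotation a)).trans toC.symm

lemma toC_rot (a : Circle) (ξ : Sph 2) : toC (sphMap (rotE a) ξ : Eucl 2) = a * toC ξ := by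
  simp [sphMap, rotE]

lemma toC_rot_iter (a : Circle) (ξ : Sph 2) (k : ℕ) :
    toC ((sphMap (rotE a))^[k] ξ : Eucl 2) = (a : ℂ) ^ k * toC ξ := by
  induction k with
  | zero => simp
  | succ k ih => rw [Function.iterate_succ_apply', toC_rot, ih]; ring

lemma toC_norm (ξ : Sph 2) : ‖toC (ξ : Eucl 2)‖ = 1 := by simp

lemma toC_ne (ξ : Sph 2) : toC (ξ : Eucl 2) ≠ 0 := by
  rw [← norm_ne_zero_iff, toC_norm]; exact one_ne_zero

lemma toC_conj (ξ : Sph 2) : toC (ξ : Eucl 2) * (starRingEnd ℂ) (toC (ξ : Eucl 2)) = 1 := by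
  rw [Complex.mul_conj, Complex.normSq_eq_norm_sq, toC_norm]; simp

lemma inner_rot (a : Circle) (ξ : Sph 2) :
    ⟪(ξ : Eucl 2), (sphMap (rotE a) ξ : Eucl 2)⟫ = (a : ℂ).re := by
  rw [inner_map_complex toC, toC_rot, mul_assoc, toC_conj, mul_one]

lemma rot_of_inner (a : Circle) (ξ η : Sph 2)
    (h : ⟪(ξ : Eucl 2), (η : Eucl 2)⟫ = (a : ℂ).re) :
    η = sphMap (rotE a) ξ ∨ ξ = sphMap (rotE a) η := by
  rw [inner_map_complex toC] at h
  set w := toC (η : Eucl 2) * (starRingEnd ℂ) (toC (ξ : Eucl 2)) with hw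
  have hwn : ‖w‖ = 1 := by rw [hw, norm_mul, RCLike.norm_conj, toC_norm, toC_norm, one_mul]
  have hwξ : w * toC (ξ : Eucl 2) = toC (η : Eucl 2) := by
    have := toC_conj ξ
    rw [hw, mul_assoc, mul_comm ((starRingEnd ℂ) _), this, mul_one]
  have hs : w.im = (a : ℂ).im ∨ w.im = -(a : ℂ).im := by
    apply sq_eq_sq_iff_eq_or_eq_neg.mp
    have h1 : w.re * w.re + w.im * w.im = 1 := by
      rw [← Complex.normSq_apply, Complex.normSq_eq_norm_sq, hwn]; norm_num
    have h2 : (a : ℂ).re * (a : ℂ).re + (a : ℂ).im * (a : ℂ).im = 1 := by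
      rw [← Complex.normSq_apply, Complex.normSq_eq_norm_sq, Circle.norm_coe]; norm_num
    rw [h] at h1
    nlinarith
  rcases hs with hs | hs
  · left
    have : w = a := Complex.ext h hs
    apply Subtype.ext
    apply toC.injective
    rw [toC_rot, ← this, hwξ]
  · right
    have : (a : ℂ) = (starRingEnd ℂ) w := Complex.ext (by simp [h]) (by simp [hs])
    apply Subtype.ext
    apply toC.injective
    rw [toC_rot, this, ← hwξ, ← mul_assoc, mul_comm ((starRingEnd ℂ) w), Complex.mul_conj,
      Complex.normSq_eq_norm_sq, hwn]
    simp

/-- The sector index of a point on the circle. -/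
def sector (q : ℕ) (ξ : Sph 2) : ℤ := ⌊(q : ℝ) * (toC (ξ : Eucl 2)).arg / (2 * Real.pi)⌋

lemma sector_meas (q : ℕ) : Measurable (sector q) := by
  unfold sector
  have : Measurable fun ξ : Sph 2 => toC (ξ : Eucl 2) :=
    (toC.continuous.comp continuous_subtype_val).measurable
  exact (((Complex.measurable_arg.comp this).const_mul _).div_const _).floor

lemma sector_rot (p q : ℕ) (hq : 0 < q) (ξ : Sph 2) :
    ((sector q (sphMap (rotE (Circle.exp (2 * Real.pi * (p / q)))) ξ) : ℤ) : ZMod q) =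
      (sector q ξ : ZMod q) + p := by
  unfold sector
  rw [toC_rot]
  have h : (((Circle.exp (2 * Real.pi * (p / q)) * toC (ξ : Eucl 2)).arg : ℝ) : Real.Angle) =
      ((2 * Real.pi * (p / q) + (toC (ξ : Eucl 2)).arg : ℝ) : Real.Angle) := by
    rw [Complex.arg_mul_coe_angle (Circle.coe_ne_zero _) (toC_ne ξ), Circle.coe_exp,
      Complex.exp_mul_I, ← Complex.ofReal_cos, ← Complex.ofReal_sin]
    have := Complex.arg_cos_add_sin_mul_I_coe_angle ((2 * Real.pi * (p / q) : ℝ) : Real.Angle)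
    rw [Real.Angle.cos_coe, Real.Angle.sin_coe] at this
    rw [this, Real.Angle.coe_add]
  obtain ⟨k, hk⟩ := Real.Angle.angle_eq_iff_two_pi_dvd_sub.mp h
  rw [sub_eq_iff_eq_add] at hk
  rw [hk]
  have hq' : (q : ℝ) ≠ 0 := by positivity
  have hpi := Real.pi_ne_zero
  have e : (q : ℝ) * (2 * Real.pi * k + (2 * Real.pi * (p / q) + (toC (ξ : Eucl 2)).arg)) /
      (2 * Real.pi) = (q : ℝ) * (toC (ξ : Eucl 2)).arg / (2 * Real.pi) +
        (((q * k + p : ℤ)) : ℝ) := by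
    push_cast
    field_simp
    ring
  rw [e, Int.floor_add_intCast]
  simp

/-- If `x ∈ [-1,1]` and `t = arccos x / (2π)` is rational, `t = p/q` with `p, q` coprime and
`q` odd, then the supremum of the normalised measures of measurable `{x}`-avoiding subsets
of the unit circle `S^1` equals `(q-1)/(2q)`, and it is attained by some measurable
`{x}`-avoiding set. -/
theorem circle_sup_q_odd (x : ℝ) (hx : x ∈ Set.Icc (-1 : ℝ) 1) (p q : ℕ)
    (hpq : Nat.Coprime p q) (hqodd : Odd q)
    (ht : Real.arccos x / (2 * Real.pi) = (p : ℝ) / (q : ℝ)) :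
    IsGreatest {m : ℝ≥0∞ | ∃ I : Set (Sph 2),
      MeasurableSet I ∧ Avoids {x} I ∧ sphMeasure 2 I = m}
      (((q - 1 : ℕ) : ℝ≥0∞) / (2 * (q : ℝ≥0∞))) := by
  obtain ⟨n, rfl⟩ := hqodd
  have hq' : ((2 * n + 1 : ℕ) : ℝ) ≠ 0 := by positivity
  have hxc : x = Real.cos (2 * Real.pi * (p / (2 * n + 1 : ℕ))) := by
    rw [← ht, mul_div_cancel₀ _ (by positivity), Real.cos_arccos hx.1 hx.2]
  set a : Circle := Circle.exp (2 * Real.pi * (p / (2 * n + 1 : ℕ))) with ha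
  have hre : (a : ℂ).re = x := by
    rw [hxc, ha, Circle.coe_exp, Complex.exp_ofReal_mul_I_re]
  have hpow : (a : ℂ) ^ (2 * n + 1) = 1 := by
    rw [ha, Circle.coe_exp, ← Complex.exp_nat_mul, Complex.exp_eq_one_iff]
    refine ⟨p, ?_⟩
    have : ((2 * n + 1 : ℕ) : ℂ) ≠ 0 := by exact_mod_cast hq'
    push_cast at this ⊢
    field_simp
  have hval : ∀ m : ℝ≥0∞, ((2 * n + 1 : ℕ) : ℝ≥0∞) * m = n →
      m = ((2 * n + 1 - 1 : ℕ) : ℝ≥0∞) / (2 * ((2 * n + 1 : ℕ) : ℝ≥0∞)) := by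
    intro m hm
    rw [ENNReal.eq_div_iff (by simp) (by finiteness), mul_assoc, hm]
    simp
  constructor
  · obtain ⟨I, hI, hav, hm⟩ := lower_abs (sphMeasure 2) (sphMap (rotE a)) (sphMap_mp _) n
      (fun ξ => (sector (2 * n + 1) ξ : ZMod (2 * n + 1)) * (p : ZMod (2 * n + 1))⁻¹)
      (fun b => sector_meas (2 * n + 1) (t := {z : ℤ | (z : ZMod (2 * n + 1)) *
        (p : ZMod (2 * n + 1))⁻¹ = b}) (MeasurableSet.of_discrete))
      (fun ξ => by
        rw [ha, sector_rot p (2 * n + 1) (by omega), add_mul, ZMod.coe_mul_inv_eq_one p hpq])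
    refine ⟨I, hI, ?_, hval _ hm⟩
    intro ξ hξ η hη h
    rw [Set.mem_singleton_iff, ← hre] at h
    rcases rot_of_inner a ξ η h with h | h
    · exact hav ξ hξ (h ▸ hη)
    · exact hav η hη (h ▸ hξ)
  · rintro m ⟨I, hI, hav, rfl⟩
    have := upper_abs (sphMeasure 2) (sphMap (rotE a)) (sphMap_mp _) n (fun ξ => by
      apply Subtype.ext
      apply toC.injective
      rw [toC_rot_iter, hpow, one_mul]) I hI (fun ξ hξ h => hav ξ hξ _ h (by
        rw [inner_rot, hre]; rfl))
    rw [ENNReal.le_div_iff_mul_le (by simp) (by left; finiteness)]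
    calc sphMeasure 2 I * (2 * ((2 * n + 1 : ℕ) : ℝ≥0∞))
        = 2 * (((2 * n + 1 : ℕ) : ℝ≥0∞) * sphMeasure 2 I) := by ring
      _ ≤ 2 * n := by gcongr
      _ = _ := by simp
end
end

section
/- Let n ≥ 3 and let X be an arbitrary subset of [-1,1]. Then there exists a Lebesgue measurable X-avoiding set I ⊆ S^{n-1} attaining the supremum α_X(n); that is, I is X-avoiding, measurable, and λ(I) ≥ λ(J) for every Lebesgue measurable X-avoiding set J ⊆ S^{n-1}. -/
open MeasureTheory Metric Matrix Filter
open scoped RealInnerProductSpace ENNReal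

noncomputable section

/-- The orthogonal group. -/
abbrev OG (n : ℕ) : Type := unitary (Eucl n →L[ℝ] Eucl n)

instance OG.instStar (n : ℕ) : ContinuousStar (Eucl n →L[ℝ] Eucl n) :=
  ⟨(ContinuousLinearMap.adjoint (𝕜 := ℝ) (E := Eucl n) (F := Eucl n)).continuous⟩

instance OG.instMS (n : ℕ) : MeasurableSpace (OG n) := borel _
instance OG.instBS (n : ℕ) : BorelSpace (OG n) := ⟨rfl⟩
instance OG.instSC (n : ℕ) : SecondCountableTopology (OG n) := by
  have : ProperSpace (Eucl n →L[ℝ] Eucl n) := FiniteDimensional.proper ℝ _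
  infer_instance

lemma OG.norm_apply {n : ℕ} (g : OG n) (x : Eucl n) : ‖(g : Eucl n →L[ℝ] Eucl n) x‖ = ‖x‖ :=
  (Unitary.linearIsometryEquiv g).norm_map x

lemma OG.inner_apply {n : ℕ} (g : OG n) (x y : Eucl n) :
    ⟪(g : Eucl n →L[ℝ] Eucl n) x, (g : Eucl n →L[ℝ] Eucl n) y⟫ = ⟪x, y⟫ :=
  (Unitary.linearIsometryEquiv g).inner_map_map x y

instance OG.instCompact (n : ℕ) : CompactSpace (OG n) := by
  have : ProperSpace (Eucl n →L[ℝ] Eucl n) := FiniteDimensional.proper ℝ _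
  apply isCompact_iff_compactSpace.mp
  apply Metric.isCompact_of_isClosed_isBounded
  · exact isClosed_unitary
  · refine (Metric.isBounded_closedBall (x := (0 : Eucl n →L[ℝ] Eucl n)) (r := 1)).subset ?_
    intro g hg
    rw [mem_closedBall_zero_iff]
    refine ContinuousLinearMap.opNorm_le_bound _ zero_le_one fun x => ?_
    rw [one_mul]
    exact (OG.norm_apply ⟨g, hg⟩ x).le

/-- Action of the orthogonal group on the sphere. -/
def act {n : ℕ} (g : OG n) (x : Sph n) : Sph n :=
  ⟨(g : Eucl n →L[ℝ] Eucl n) x, by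
    rw [mem_sphere_zero_iff_norm, OG.norm_apply]; exact mem_sphere_zero_iff_norm.mp x.2⟩

lemma act_mul {n : ℕ} (g h : OG n) (x : Sph n) : act (g * h) x = act g (act h x) := rfl
lemma act_one {n : ℕ} (x : Sph n) : act (1 : OG n) x = x := rfl

lemma continuous_act {n : ℕ} : Continuous (fun p : OG n × Sph n => act p.1 p.2) := by
  unfold act
  refine Continuous.subtype_mk ?_ _
  exact (continuous_subtype_val.comp continuous_fst).clm_apply
    (continuous_subtype_val.comp continuous_snd)

lemma continuous_act_right {n : ℕ} (g : OG n) : Continuous (act g) :=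
  continuous_act.comp (Continuous.prodMk_right g)

lemma measurable_act {n : ℕ} : Measurable (fun p : OG n × Sph n => act p.1 p.2) :=
  continuous_act.measurable

lemma measurable_act_left {n : ℕ} (x : Sph n) : Measurable (fun g : OG n => act g x) :=
  (continuous_act.comp (Continuous.prodMk_left x)).measurable

lemma inner_act {n : ℕ} (g : OG n) (x y : Sph n) :
    ⟪(act g x : Eucl n), (act g y : Eucl n)⟫ = ⟪(x : Eucl n), (y : Eucl n)⟫ :=
  OG.inner_apply g x y

/-- two-point homogeneity through reflections -/
lemma exists_act {n : ℕ} (x y z : Sph n)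
    (h : ⟪(x : Eucl n), (y : Eucl n)⟫ = ⟪(x : Eucl n), (z : Eucl n)⟫) :
    ∃ g : OG n, act g x = x ∧ act g y = z := by
  let R := Submodule.reflection (ℝ ∙ ((y : Eucl n) - z))ᗮ
  refine ⟨Unitary.linearIsometryEquiv.symm R, ?_, ?_⟩
  · apply Subtype.ext
    change R x = x
    rw [Submodule.reflection_eq_self_iff, Submodule.mem_orthogonal_singleton_iff_inner_left,
      inner_sub_right, h, sub_self]
  · apply Subtype.ext
    change R y = z
    apply Submodule.reflection_sub
    rw [norm_eq_of_mem_sphere, norm_eq_of_mem_sphere]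

lemma exists_act' {n : ℕ} (y z : Sph n) : ∃ g : OG n, act g y = z := by
  let R := Submodule.reflection (ℝ ∙ ((y : Eucl n) - z))ᗮ
  refine ⟨Unitary.linearIsometryEquiv.symm R, ?_⟩
  apply Subtype.ext
  change R y = z
  apply Submodule.reflection_sub
  rw [norm_eq_of_mem_sphere, norm_eq_of_mem_sphere]

lemma exists_act_pair {n : ℕ} (x y x' y' : Sph n)
    (h : ⟪(x : Eucl n), (y : Eucl n)⟫ = ⟪(x' : Eucl n), (y' : Eucl n)⟫) :
    ∃ g : OG n, act g x = x' ∧ act g y = y' := by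
  obtain ⟨g, hg⟩ := exists_act' x x'
  obtain ⟨k, hk1, hk2⟩ := exists_act x' (act g y) y' (by rw [← h, ← hg, inner_act])
  exact ⟨k * g, by rw [act_mul, hg, hk1], by rw [act_mul, hk2]⟩

/-- A right-invariant probability measure. -/
def ogM (n : ℕ) : Measure (OG n) :=
  (Measure.haarMeasure (⊤ : TopologicalSpace.PositiveCompacts (OG n))).inv

instance ogM.instR (n : ℕ) : (ogM n).IsMulRightInvariant := by unfold ogM; infer_instance

instance ogM.instP (n : ℕ) : IsProbabilityMeasure (ogM n) := by
  constructor
  rw [ogM, Measure.inv_apply, Set.inv_univ]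
  exact Measure.haarMeasure_self

lemma ogM_pos {n : ℕ} (U : Set (OG n)) (hU : IsOpen U) (h : U.Nonempty) : ogM n U ≠ 0 := by
  rw [ogM, Measure.inv_apply]
  exact hU.inv.measure_ne_zero _ h.inv

lemma integral_act_right {n : ℕ} (h : OG n) (F : OG n → ℝ) :
    ∫ g, F (g * h) ∂(ogM n) = ∫ g, F g ∂(ogM n) := integral_mul_right_eq_self F h

instance sphM.instP (n : ℕ) [NeZero n] : IsProbabilityMeasure (sphMeasure n) := by
  constructor
  rw [sphMeasure, Measure.smul_apply, smul_eq_mul]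
  refine ENNReal.inv_mul_cancel ?_ (measure_ne_top _ _)
  rw [Ne, Measure.measure_univ_eq_zero]
  exact Measure.toSphere_ne_zero _

open scoped Pointwise in
lemma act_preserving {n : ℕ} (g : OG n) :
    MeasurePreserving (act g) (sphMeasure n) (sphMeasure n) := by
  have hm : Measurable (act g) := (continuous_act_right g).measurable
  refine MeasurePreserving.smul_measure ⟨hm, ?_⟩ _
  ext s hs
  rw [Measure.map_apply hm hs, Measure.toSphere_apply' _ hs, Measure.toSphere_apply' _ (hm hs)]
  congr 1
  let e := Unitary.linearIsometryEquiv g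
  have he : MeasurePreserving e volume volume := e.measurePreserving
  have hemb : MeasurableEmbedding e := e.toHomeomorph.measurableEmbedding
  rw [← he.measure_preimage_emb hemb (Set.Ioo (0 : ℝ) 1 • (Subtype.val '' s))]
  congr 1
  ext z
  simp only [Set.mem_smul, Set.mem_preimage, Set.mem_image]
  constructor
  · rintro ⟨r, hr, _, ⟨x, hx, rfl⟩, rfl⟩
    exact ⟨r, hr, _, ⟨act g x, hx, rfl⟩, (e.map_smul r _).symm⟩
  · rintro ⟨r, hr, _, ⟨x, hx, rfl⟩, h⟩
    refine ⟨r, hr, _, ⟨act g⁻¹ x, ?_, rfl⟩, ?_⟩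
    · rw [← act_mul, mul_inv_cancel, act_one]; exact hx
    · apply e.injective
      rw [← h, e.map_smul]
      congr 1
      have : act g (act g⁻¹ x) = x := by rw [← act_mul, mul_inv_cancel, act_one]
      exact congrArg Subtype.val this


lemma map_act {n : ℕ} [NeZero n] (x : Sph n) :
    MeasurePreserving (fun g => act g x) (ogM n) (sphMeasure n) := by
  have hmx := measurable_act_left x
  refine ⟨hmx, ?_⟩
  ext s hs
  rw [Measure.map_apply hmx hs]
  have hms : MeasurableSet {p : OG n × Sph n | act p.1 p.2 ∈ s} := measurable_act hs
  have h1 : ∀ y : Sph n, ogM n {g | act g y ∈ s} = ogM n {g | act g x ∈ s} := by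
    intro y
    obtain ⟨h, hh⟩ := exists_act' x y
    have := (measurePreserving_mul_right (ogM n) h).measure_preimage
      (s := {g | act g x ∈ s}) (measurable_act_left x hs).nullMeasurableSet
    rw [← this]
    congr 1
    ext g
    simp [act_mul, hh]
  have h2 : ∀ g : OG n, sphMeasure n {y | act g y ∈ s} = sphMeasure n s := fun g =>
    (act_preserving g).measure_preimage hs.nullMeasurableSet
  have e1 := Measure.prod_apply (μ := ogM n) (ν := sphMeasure n) hms
  have e2 := Measure.prod_apply_symm (μ := ogM n) (ν := sphMeasure n) hms
  rw [e1] at e2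
  simp only [Set.preimage_ofPred_eq] at e2
  simp_rw [h1, h2] at e2
  have e3 : ogM n {g | act g x ∈ s} = sphMeasure n s := by simpa using e2.symm
  exact e3

lemma small_translate {n : ℕ} [NeZero n] {J : Set (Sph n)} (hJ : MeasurableSet J)
    {ε : ℝ≥0∞} (hε : ε ≠ 0) :
    ∃ U : Set (OG n), IsOpen U ∧ (1 : OG n) ∈ U ∧
      ∀ g ∈ U, sphMeasure n {x | x ∈ J ∧ act g x ∉ J} ≤ ε := by
  let F : C(OG n, C(Sph n, Sph n)) := (ContinuousMap.mk _ (continuous_act (n := n))).curry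
  have hF : Tendsto F (nhds 1) (nhds (F 1)) := F.continuous.tendsto 1
  have := tendsto_measure_symmDiff_preimage_nhds_zero (μ := sphMeasure n) (ν := sphMeasure n)
    (s := J) hF (Eventually.of_forall fun g => act_preserving g) (act_preserving 1)
    hJ.nullMeasurableSet (measure_ne_top _ _)
  have h2 := (ENNReal.tendsto_nhds_zero.mp this) ε (pos_iff_ne_zero.mpr hε)
  obtain ⟨U, hU, hUo, h1⟩ := _root_.mem_nhds_iff.mp h2
  refine ⟨U, hUo, h1, fun g hg => le_trans (measure_mono ?_) (hU hg)⟩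
  rintro x ⟨hx, hgx⟩
  exact Or.inr ⟨hx, hgx⟩

lemma density_set {n : ℕ} [NeZero n] {J : Set (Sph n)} (hJ : MeasurableSet J) :
    ∃ K ⊆ J, MeasurableSet K ∧ sphMeasure n (J \ K) = 0 ∧ ∀ x ∈ K, ∀ y ∈ K,
      ¬ (∀ᵐ g ∂(ogM n), ¬ (act g x ∈ J ∧ act g y ∈ J)) := by
  choose U hUo hU1 hU using fun j : ℕ =>
    small_translate hJ (ε := (2⁻¹ : ℝ≥0∞) ^ j) (by simp)
  have hJc : ∀ x, MeasurableSet {g : OG n | act g x ∉ J} := fun x =>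
    measurable_act_left x hJ.compl
  let φ : ℕ → Sph n → ℝ≥0∞ := fun j x => (ogM n).restrict (U j) {g | act g x ∉ J}
  have hS : MeasurableSet {p : Sph n × OG n | act p.2 p.1 ∉ J} :=
    (measurable_act.comp measurable_swap) hJ.compl
  have hφ : ∀ j, Measurable (φ j) := fun j => measurable_measure_prodMk_left hS
  let B : ℕ → Set (Sph n) := fun j => {x | x ∈ J ∧ ogM n (U j) ≤ 3 * φ j x}
  have hB : ∀ j, MeasurableSet (B j) := fun j =>
    hJ.inter (measurableSet_le measurable_const ((hφ j).const_mul 3))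
  have hBm : ∀ j, sphMeasure n (B j) ≤ 3 * (2⁻¹ : ℝ≥0∞) ^ j := by
    intro j
    have hpos := ogM_pos (U j) (hUo j) ⟨1, hU1 j⟩
    have hS' : MeasurableSet {p : Sph n × OG n | p.1 ∈ J ∧ act p.2 p.1 ∉ J} :=
      (measurable_fst hJ).inter hS
    have e1 := Measure.prod_apply (μ := sphMeasure n) (ν := (ogM n).restrict (U j)) hS'
    rw [Measure.prod_apply_symm hS'] at e1
    simp only [Set.preimage_ofPred_eq] at e1
    have l1 : ∫⁻ g, sphMeasure n {x | x ∈ J ∧ act g x ∉ J} ∂((ogM n).restrict (U j))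
        ≤ (2⁻¹ : ℝ≥0∞) ^ j * ogM n (U j) := by
      rw [← setLIntegral_const]
      exact setLIntegral_mono' (hUo j).measurableSet fun g hg => hU j g hg
    have l2 : ogM n (U j) * sphMeasure n (B j) ≤
        ∫⁻ x, 3 * (ogM n).restrict (U j) {g | x ∈ J ∧ act g x ∉ J} ∂(sphMeasure n) := by
      rw [← setLIntegral_const]
      refine le_trans (setLIntegral_mono' (hB j) ?_) (setLIntegral_le_lintegral _ _)
      intro x hx
      have : {g : OG n | x ∈ J ∧ act g x ∉ J} = {g | act g x ∉ J} := by ext g; simp [hx.1]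
      rw [this]
      exact hx.2
    rw [lintegral_const_mul' _ _ (by simp), ← e1] at l2
    have l3 : ogM n (U j) * sphMeasure n (B j) ≤ ogM n (U j) * (3 * (2⁻¹ : ℝ≥0∞) ^ j) := by
      refine l2.trans ((mul_le_mul_right l1 3).trans (le_of_eq ?_))
      ring
    exact (ENNReal.mul_le_mul_iff_right hpos (measure_ne_top _ _)).mp l3
  have hsum : ∑' j, sphMeasure n (B j) ≠ ∞ := by
    refine ne_top_of_le_ne_top ?_ (ENNReal.tsum_le_tsum hBm)
    rw [ENNReal.tsum_mul_left, ENNReal.tsum_geometric]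
    simp [ENNReal.mul_eq_top]
  have hlim := measure_limsup_atTop_eq_zero hsum
  refine ⟨J \ limsup B atTop, Set.sdiff_subset, hJ.diff (MeasurableSet.measurableSet_limsup hB),
    ?_, ?_⟩
  · refine measure_mono_null ?_ hlim
    rintro x ⟨hx, h⟩
    by_contra hc
    exact h ⟨hx, hc⟩
  · rintro x ⟨hx, hxl⟩ y ⟨hy, hyl⟩ hae
    rw [mem_limsup_iff_frequently_mem, not_frequently] at hxl hyl
    obtain ⟨j, hj1, hj2⟩ := (hxl.and hyl).exists
    have k1 : 3 * φ j x < ogM n (U j) := by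
      by_contra hc; exact hj1 ⟨hx, not_lt.mp hc⟩
    have k2 : 3 * φ j y < ogM n (U j) := by
      by_contra hc; exact hj2 ⟨hy, not_lt.mp hc⟩
    have k3 : ogM n (U j) ≤ φ j x + φ j y := by
      refine le_trans ?_ (measure_union_le _ _)
      rw [← Measure.restrict_apply_univ]
      refine measure_mono_ae ?_
      filter_upwards [ae_restrict_of_ae hae] with g hg _
      by_contra hc
      apply hg
      by_contra h2
      apply hc
      by_cases h3 : act g x ∈ J
      · exact Or.inr fun h4 => h2 ⟨h3, h4⟩
      · exact Or.inl h3
    have hfin : ogM n (U j) ≠ ∞ := measure_ne_top _ _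
    have f1 : φ j x ≠ ∞ := measure_ne_top _ _
    have f2 : φ j y ≠ ∞ := measure_ne_top _ _
    lift (ogM n (U j)) to NNReal using hfin with u
    lift φ j x to NNReal using f1 with a
    lift φ j y to NNReal using f2 with b
    norm_cast at k1 k2 k3
    have k1' : 3 * (a : ℝ) < u := by exact_mod_cast k1
    have k2' : 3 * (b : ℝ) < u := by exact_mod_cast k2
    have k3' : (u : ℝ) ≤ a + b := by exact_mod_cast k3
    have := a.2
    have := b.2
    have ha : (0 : ℝ) ≤ a := a.2
    have hb : (0 : ℝ) ≤ b := b.2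
    linarith


/-- distribution of the inner product of two random points -/
def ipM (n : ℕ) : Measure ℝ :=
  ((sphMeasure n).prod (sphMeasure n)).map (fun p => ⟪(p.1 : Eucl n), (p.2 : Eucl n)⟫)

lemma continuous_ip {n : ℕ} :
    Continuous (fun p : Sph n × Sph n => ⟪(p.1 : Eucl n), (p.2 : Eucl n)⟫) :=
  (continuous_subtype_val.comp continuous_fst).inner (continuous_subtype_val.comp continuous_snd)

open scoped Pointwise in
lemma cone_null {n : ℕ} [NeZero n] {T : Set (Sph n)} (hT : MeasurableSet T)
    (h0 : sphMeasure n T = 0) :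
    (volume : Measure (Eucl n)) {z | ∃ x ∈ T, ∃ r : ℝ, 0 < r ∧ z = r • (x : Eucl n)} = 0 := by
  have h1 : (volume : Measure (Eucl n)).toSphere T = 0 := by
    rw [sphMeasure, Measure.smul_apply, smul_eq_mul, mul_eq_zero] at h0
    rcases h0 with h0 | h0
    · exact absurd h0 (ENNReal.inv_ne_zero.mpr (measure_ne_top _ _))
    · exact h0
  rw [Measure.toSphere_apply' _ hT, mul_eq_zero] at h1
  have h2 : (volume : Measure (Eucl n)) (Set.Ioo (0 : ℝ) 1 • (Subtype.val '' T)) = 0 := by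
    rcases h1 with h1 | h1
    · simp [NeZero.ne n] at h1
    · exact h1
  have h3 : (volume : Measure (Eucl n)) (⋃ k : ℕ, ((k : ℝ) • (Set.Ioo (0 : ℝ) 1 • (Subtype.val '' T)))) = 0 := by
    rw [measure_iUnion_null_iff]
    intro k
    rw [Measure.addHaar_smul, h2, mul_zero]
  refine measure_mono_null ?_ h3
  rintro z ⟨x, hx, r, hr, rfl⟩
  obtain ⟨k, hk⟩ := exists_nat_gt r
  have hk0 : (0 : ℝ) < k := hr.trans hk
  rw [Set.mem_iUnion]
  refine ⟨k, Set.mem_smul_set.mpr ⟨(r / k) • (x : Eucl n), Set.mem_smul.mpr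
    ⟨r / k, ⟨by positivity, (div_lt_one hk0).mpr hk⟩, x, ⟨x, hx, rfl⟩, rfl⟩, ?_⟩⟩
  rw [smul_smul, mul_div_cancel₀ _ hk0.ne']

lemma line_null {n : ℕ} {Z : Set (Eucl n)} (hZ : volume Z = 0) (x : Eucl n) :
    ∀ᵐ z : Eucl n, (volume : Measure ℝ) {a : ℝ | z + a • x ∈ Z} = 0 := by
  obtain ⟨Z', hZZ, hm, hZ'⟩ := exists_measurable_superset_of_null hZ
  have hW : MeasurableSet {p : Eucl n × ℝ | p.1 + p.2 • x ∈ Z'} := by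
    have : Measurable (fun p : Eucl n × ℝ => p.1 + p.2 • x) := by fun_prop
    exact this hm
  have h0 : ((volume : Measure (Eucl n)).prod (volume : Measure ℝ))
      {p : Eucl n × ℝ | p.1 + p.2 • x ∈ Z'} = 0 := by
    rw [Measure.prod_apply_symm hW]
    simp only [Set.preimage_ofPred_eq]
    have : ∀ a : ℝ, (volume : Measure (Eucl n)) {z | z + a • x ∈ Z'} = 0 := by
      intro a
      have := measure_preimage_add_right (volume : Measure (Eucl n)) (a • x) Z'
      rw [hZ'] at this
      exact this
    simp [this]
  have := Measure.ae_ae_of_ae_prod (measure_eq_zero_iff_ae_notMem.mp h0)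
  filter_upwards [this] with z hz
  refine measure_mono_null ?_ (measure_eq_zero_iff_ae_notMem.mpr hz)
  intro a ha
  exact hZZ ha

lemma ipM_null {n : ℕ} (hn : 2 ≤ n) {S : Set ℝ} (hS : MeasurableSet S)
    (h0 : ipM n S = 0) : volume (S ∩ Set.Ioo (-1 : ℝ) 1) = 0 := by
  have : NeZero n := ⟨by omega⟩
  rw [ipM, Measure.map_apply continuous_ip.measurable hS] at h0
  obtain ⟨x, hx⟩ := (Measure.ae_ae_of_ae_prod (measure_eq_zero_iff_ae_notMem.mp h0)).exists
  let T : Set (Sph n) := {y | ⟪(x : Eucl n), (y : Eucl n)⟫ ∈ S}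
  have hT : MeasurableSet T :=
    (continuous_ip.comp (Continuous.prodMk_right x)).measurable hS
  have hT0 : sphMeasure n T = 0 := measure_eq_zero_iff_ae_notMem.mpr hx
  have hZ := cone_null hT hT0
  have hxn : ‖(x : Eucl n)‖ = 1 := norm_eq_of_mem_sphere x
  have hspan : ∀ᵐ z : Eucl n, z ∉ (ℝ ∙ (x : Eucl n)) := by
    refine measure_eq_zero_iff_ae_notMem.mp (Measure.addHaar_submodule volume (ℝ ∙ (x : Eucl n)) ?_)
    intro htop
    have h1 := finrank_span_singleton (K := ℝ) (v := (x : Eucl n)) (by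
      intro h; rw [h] at hxn; simp at hxn)
    rw [htop, finrank_top, finrank_euclideanSpace_fin] at h1
    omega
  obtain ⟨z, hz1, hz2⟩ := ((line_null hZ (x : Eucl n)).and hspan).exists
  set p : ℝ := ⟪(x : Eucl n), z⟫ with hp
  set w : Eucl n := z - p • (x : Eucl n) with hw
  have hxx : ⟪(x : Eucl n), (x : Eucl n)⟫ = 1 := by rw [real_inner_self_eq_norm_sq, hxn]; norm_num
  have hxw : ⟪(x : Eucl n), w⟫ = 0 := by
    rw [hw, inner_sub_right, inner_smul_right, hxx, ← hp]; ring
  have hw0 : w ≠ 0 := by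
    intro h
    apply hz2
    rw [Submodule.mem_span_singleton]
    exact ⟨p, (sub_eq_zero.mp h).symm⟩
  set q : ℝ := ‖w‖ ^ 2 with hq
  have hq0 : 0 < q := by have := norm_pos_iff.mpr hw0; positivity
  have hnorm : ∀ a : ℝ, ‖z + a • (x : Eucl n)‖ = √((p + a) ^ 2 + q) := by
    intro a
    have e : z + a • (x : Eucl n) = (p + a) • (x : Eucl n) + w := by rw [hw]; module
    rw [eq_comm, Real.sqrt_eq_iff_mul_self_eq (by positivity) (norm_nonneg _), e,
      ← real_inner_self_eq_norm_mul_norm]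
    simp only [inner_add_left, inner_add_right, inner_smul_left, inner_smul_right, hxx, hxw,
      real_inner_comm (x : Eucl n) w, real_inner_self_eq_norm_sq w]
    simp [hq]; ring
  let σ : ℝ → ℝ := fun a => (p + a) / √((p + a) ^ 2 + q)
  have hσd : Differentiable ℝ σ := by
    intro a
    have : (p + a) ^ 2 + q ≠ 0 := by positivity
    have h2 : √((p + a) ^ 2 + q) ≠ 0 := by positivity
    refine DifferentiableAt.div (by fun_prop) (DifferentiableAt.sqrt (by fun_prop) this) h2
  have himg := addHaar_image_eq_zero_of_differentiableOn_of_addHaar_eq_zero (volume : Measure ℝ)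
    (f := σ) hσd.differentiableOn hz1
  refine measure_mono_null ?_ himg
  rintro c ⟨hcS, hc1, hc2⟩
  have hc : 0 < 1 - c ^ 2 := by nlinarith
  have hsq : (√q) ^ 2 = q := Real.sq_sqrt hq0.le
  have hsc : (√(1 - c ^ 2)) ^ 2 = 1 - c ^ 2 := Real.sq_sqrt hc.le
  have hscp : 0 < √(1 - c ^ 2) := Real.sqrt_pos.mpr hc
  have hsqp : 0 < √q := Real.sqrt_pos.mpr hq0
  set a : ℝ := c * √q / √(1 - c ^ 2) - p with ha
  have hroot : √((p + a) ^ 2 + q) = √q / √(1 - c ^ 2) := by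
    rw [Real.sqrt_eq_iff_mul_self_eq (by positivity) (by positivity), ha]
    field_simp
    rw [hsc, hsq]
    linear_combination c ^ 2 * hsq
  have hσ : σ a = c := by
    change (p + a) / √((p + a) ^ 2 + q) = c
    rw [hroot, ha]
    field_simp
    ring
  refine ⟨a, ?_, hσ⟩
  have hr : 0 < ‖z + a • (x : Eucl n)‖ := by rw [hnorm]; positivity
  refine ⟨⟨‖z + a • (x : Eucl n)‖⁻¹ • (z + a • (x : Eucl n)), ?_⟩, ?_,
    ‖z + a • (x : Eucl n)‖, hr, ?_⟩
  · rw [mem_sphere_zero_iff_norm, norm_smul, norm_inv, norm_norm, inv_mul_cancel₀ hr.ne']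
  · change ⟪(x : Eucl n), ‖z + a • (x : Eucl n)‖⁻¹ • (z + a • (x : Eucl n))⟫ ∈ S
    rw [inner_smul_right, inner_add_right, inner_smul_right, hxx, ← hp, hnorm]
    have : (√((p + a) ^ 2 + q))⁻¹ * (p + a * 1) = c := by
      rw [← hσ]; change _ = (p + a) / √((p + a) ^ 2 + q); ring
    rw [this]; exact hcS
  · rw [smul_smul, mul_inv_cancel₀ hr.ne', one_smul]

/-- uniform measure on the unit interval -/
def uM : Measure ℝ := volume.restrict (Set.Icc (0 : ℝ) 1)

instance uM.instP : IsProbabilityMeasure uM := by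
  constructor
  simp [uM]

lemma cos_null {t : ℝ} (ht : -1 < t) (ht' : t < 1) {S : Set ℝ}
    (hS0 : volume (S ∩ Set.Ioo (-1 : ℝ) 1) = 0) :
    volume {d : ℝ | 0 < d ∧ d ≤ 1 ∧ t ^ 2 + (1 - t ^ 2) * Real.cos d ∈ S} = 0 := by
  have hs : 0 < 1 - t ^ 2 := by nlinarith
  let Ψ : ℝ → ℝ := fun c => Real.arccos ((c - t ^ 2) / (1 - t ^ 2))
  let D : Set ℝ := {c | c ∈ S ∩ Set.Ioo (-1 : ℝ) 1 ∧ -1 < (c - t ^ 2) / (1 - t ^ 2) ∧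
    (c - t ^ 2) / (1 - t ^ 2) < 1}
  have hD : volume D = 0 := measure_mono_null (fun c hc => hc.1) hS0
  have hΨ : DifferentiableOn ℝ Ψ D := by
    intro c hc
    apply DifferentiableAt.differentiableWithinAt
    have h1 : DifferentiableAt ℝ Real.arccos ((c - t ^ 2) / (1 - t ^ 2)) :=
      Real.differentiableAt_arccos.mpr ⟨hc.2.1.ne', hc.2.2.ne⟩
    exact DifferentiableAt.comp c (f := fun c : ℝ => (c - t ^ 2) / (1 - t ^ 2)) h1 (by fun_prop)
  refine measure_mono_null ?_
    (addHaar_image_eq_zero_of_differentiableOn_of_addHaar_eq_zero (volume : Measure ℝ) hΨ hD)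
  rintro d ⟨hd0, hd1, hd⟩
  have hpi : (1 : ℝ) < Real.pi := by linarith [Real.pi_gt_three]
  have hc1 : Real.cos d < 1 := by
    rw [← Real.cos_zero]
    exact Real.cos_lt_cos_of_nonneg_of_le_pi le_rfl (by linarith) hd0
  have hc2 : -1 < Real.cos d := by
    rw [← Real.cos_pi]
    exact Real.cos_lt_cos_of_nonneg_of_le_pi hd0.le le_rfl (by linarith)
  have he : (t ^ 2 + (1 - t ^ 2) * Real.cos d - t ^ 2) / (1 - t ^ 2) = Real.cos d := by
    field_simp; ring
  refine ⟨_, ⟨⟨hd, ?_, ?_⟩, ?_⟩, ?_⟩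
  · nlinarith
  · nlinarith
  · rw [he]; exact ⟨hc2, hc1⟩
  · change Real.arccos _ = d
    rw [he, Real.arccos_cos hd0.le (by linarith)]

lemma law_ac {n : ℕ} (hn : 2 ≤ n) {t : ℝ} (ht : -1 < t) (ht' : t < 1) :
    (uM.prod uM).map (fun p : ℝ × ℝ => t ^ 2 + (1 - t ^ 2) * Real.cos (p.1 - p.2)) ≪ ipM n := by
  refine Measure.AbsolutelyContinuous.mk fun S hS h0 => ?_
  have hm : Measurable (fun p : ℝ × ℝ => t ^ 2 + (1 - t ^ 2) * Real.cos (p.1 - p.2)) := by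
    fun_prop
  rw [Measure.map_apply hm hS, Measure.measure_prod_null (hm hS)]
  have h1 := cos_null ht ht' (ipM_null hn hS h0)
  set D := {d : ℝ | 0 < d ∧ d ≤ 1 ∧ t ^ 2 + (1 - t ^ 2) * Real.cos d ∈ S} with hD
  have hb : ∀ b ∈ Set.Icc (0 : ℝ) 1, uM (Prod.mk b ⁻¹' ((fun p : ℝ × ℝ =>
      t ^ 2 + (1 - t ^ 2) * Real.cos (p.1 - p.2)) ⁻¹' S)) = 0 := by
    intro b hb
    rw [uM, Measure.restrict_apply' measurableSet_Icc]
    have n1 : volume ((fun c => c - b) ⁻¹' D) = 0 := by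
      simp only [sub_eq_add_neg]
      rw [measure_preimage_add_right, h1]
    have n2 : volume ((fun c => b - c) ⁻¹' D) = 0 := by
      rw [(Measure.measurePreserving_sub_left volume b).measure_preimage_emb
        (MeasurableEquiv.subLeft b).measurableEmbedding, h1]
    have n3 : volume ({b} : Set ℝ) = 0 := by simp
    refine measure_mono_null ?_ (measure_union_null (measure_union_null n1 n2) n3)
    rintro c ⟨hc, hc0, hc1⟩
    simp only [Set.mem_preimage] at hc
    rcases lt_trichotomy b c with h | h | h
    · refine Or.inl (Or.inl ⟨by linarith, by linarith [hb.1], ?_⟩)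
      rw [← Real.cos_neg, neg_sub]; exact hc
    · exact Or.inr h.symm
    · exact Or.inl (Or.inr ⟨by linarith, by linarith [hb.2], hc⟩)
  filter_upwards [ae_restrict_mem measurableSet_Icc] with b hb'
  exact hb b hb'

lemma exists_circle {n : ℕ} (hn : 3 ≤ n) (x y : Sph n) {t : ℝ}
    (hxy : ⟪(x : Eucl n), (y : Eucl n)⟫ = t) (ht : -1 < t) (ht' : t < 1) :
    ∃ c : ℝ → Sph n, Continuous c ∧ (∀ b, ⟪(x : Eucl n), (c b : Eucl n)⟫ = t) ∧
      ∀ b b', ⟪(c b : Eucl n), (c b' : Eucl n)⟫ = t ^ 2 + (1 - t ^ 2) * Real.cos (b - b') := by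
  have hs : 0 < 1 - t ^ 2 := by nlinarith
  have hxn : ‖(x : Eucl n)‖ = 1 := norm_eq_of_mem_sphere x
  have hyn : ‖(y : Eucl n)‖ = 1 := norm_eq_of_mem_sphere y
  have hxx : ⟪(x : Eucl n), (x : Eucl n)⟫ = 1 := by rw [real_inner_self_eq_norm_sq, hxn]; norm_num
  have hyy : ⟪(y : Eucl n), (y : Eucl n)⟫ = 1 := by rw [real_inner_self_eq_norm_sq, hyn]; norm_num
  have hyx : ⟪(y : Eucl n), (x : Eucl n)⟫ = t := by rw [real_inner_comm, hxy]
  set u : Eucl n := (y : Eucl n) - t • (x : Eucl n) with hu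
  have hxu : ⟪(x : Eucl n), u⟫ = 0 := by
    rw [hu, inner_sub_right, inner_smul_right, hxx, hxy]; ring
  have huu : ⟪u, u⟫ = 1 - t ^ 2 := by
    rw [hu]
    simp only [inner_sub_right, inner_sub_left, inner_smul_right, inner_smul_left, hxx, hxy, hyy, hyx]
    simp; ring
  obtain ⟨v0, hv0, hv0n⟩ : ∃ v : Eucl n, v ∈ (Submodule.span ℝ {(x : Eucl n), u})ᗮ ∧ v ≠ 0 := by
    apply Submodule.exists_mem_ne_zero_of_ne_bot
    rw [Ne, Submodule.orthogonal_eq_bot_iff]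
    intro htop
    have h1 := finrank_span_le_card (R := ℝ) ({(x : Eucl n), u} : Set (Eucl n))
    rw [htop, finrank_top, finrank_euclideanSpace_fin] at h1
    have h2 : ({(x : Eucl n), u} : Set (Eucl n)).toFinset.card ≤ 2 := by
      rw [Set.toFinset_insert, Set.toFinset_singleton]
      exact Finset.card_le_two
    omega
  have hvx0 : ⟪(x : Eucl n), v0⟫ = 0 := (Submodule.mem_orthogonal _ _).mp hv0 _
    (Submodule.subset_span (by simp))
  have hvu0 : ⟪u, v0⟫ = 0 := (Submodule.mem_orthogonal _ _).mp hv0 _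
    (Submodule.subset_span (by simp))
  set v : Eucl n := (√(1 - t ^ 2) / ‖v0‖) • v0 with hv
  have hxv : ⟪(x : Eucl n), v⟫ = 0 := by rw [hv, inner_smul_right, hvx0, mul_zero]
  have huv : ⟪u, v⟫ = 0 := by rw [hv, inner_smul_right, hvu0, mul_zero]
  have hvv : ⟪v, v⟫ = 1 - t ^ 2 := by
    have := norm_pos_iff.mpr hv0n
    rw [hv, inner_smul_right, inner_smul_left, real_inner_self_eq_norm_sq]
    simp only [conj_trivial]
    field_simp
    rw [Real.sq_sqrt hs.le]
  have hux : ⟪u, (x : Eucl n)⟫ = 0 := by rw [real_inner_comm, hxu]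
  have hvx : ⟪v, (x : Eucl n)⟫ = 0 := by rw [real_inner_comm, hxv]
  have hvu : ⟪v, u⟫ = 0 := by rw [real_inner_comm, huv]
  let C : ℝ → Eucl n := fun b => t • (x : Eucl n) + Real.cos b • u + Real.sin b • v
  have hCC : ∀ b b', ⟪C b, C b'⟫ = t ^ 2 + (1 - t ^ 2) * Real.cos (b - b') := by
    intro b b'
    simp only [C, inner_add_left, inner_add_right, inner_smul_left, inner_smul_right, hxx, hxu,
      hxv, huu, hux, huv, hvv, hvx, hvu, Real.cos_sub, conj_trivial]
    ring
  have hCn : ∀ b, C b ∈ sphere (0 : Eucl n) 1 := by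
    intro b
    rw [mem_sphere_zero_iff_norm, ← sq_eq_sq₀ (norm_nonneg _) zero_le_one,
      ← real_inner_self_eq_norm_sq, hCC, sub_self, Real.cos_zero]
    ring
  refine ⟨fun b => ⟨C b, hCn b⟩, ?_, ?_, hCC⟩
  · refine Continuous.subtype_mk ?_ _
    fun_prop
  · intro b
    simp only [C, inner_add_right, inner_smul_right, hxx, hxu, hxv]
    ring


lemma weak_L1 {α : Type*} [MeasurableSpace α] {μ : Measure α} [IsFiniteMeasure μ]
    {h : ℕ → α → ℝ} (hm : ∀ k, Measurable (h k)) (hb : ∀ k x, |h k x| ≤ 1)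
    (hw : ∀ A, MeasurableSet A → Tendsto (fun k => ∫ x in A, h k x ∂μ) atTop (nhds 0))
    {φ : α → ℝ} (hφ : Integrable φ μ) :
    Tendsto (fun k => ∫ x, φ x * h k x ∂μ) atTop (nhds 0) := by
  have hi : ∀ k (φ : α → ℝ), Integrable φ μ → Integrable (fun x => φ x * h k x) μ := by
    intro k φ hφ
    exact hφ.mul_bdd (c := 1) (hm k).aestronglyMeasurable (Eventually.of_forall fun x => hb k x)
  refine Integrable.induction (P := fun φ : α → ℝ =>
    Tendsto (fun k => ∫ x, φ x * h k x ∂μ) atTop (nhds 0)) ?_ ?_ ?_ ?_ hφ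
  · intro c s hs _
    have : ∀ k, ∫ x, s.indicator (fun _ => c) x * h k x ∂μ = c * ∫ x in s, h k x ∂μ := by
      intro k
      rw [← integral_indicator hs, ← integral_const_mul]
      congr 1
      ext x
      by_cases hx : x ∈ s <;> simp [hx]
    simp_rw [this]
    simpa using (hw s hs).const_mul c
  · intro f g _ hf hg h1 h2
    have : ∀ k, ∫ x, (f + g) x * h k x ∂μ = ∫ x, f x * h k x ∂μ + ∫ x, g x * h k x ∂μ := by
      intro k
      rw [← integral_add (hi k f hf) (hi k g hg)]
      simp [add_mul]
    simp_rw [this]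
    simpa using h1.add h2
  · apply isClosed_of_closure_subset
    intro f hf
    rw [Metric.mem_closure_iff] at hf
    change Tendsto (fun k => ∫ x, f x * h k x ∂μ) atTop (nhds 0)
    rw [Metric.tendsto_atTop]
    intro ε hε
    obtain ⟨g, hg, hfg⟩ := hf (ε / 2) (by linarith)
    change Tendsto (fun k => ∫ x, g x * h k x ∂μ) atTop (nhds 0) at hg
    obtain ⟨N, hN⟩ := (Metric.tendsto_atTop.mp hg) (ε / 2) (by linarith)
    refine ⟨N, fun k hk => ?_⟩
    have hk := hN k hk
    rw [Real.dist_eq, sub_zero] at hk ⊢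
    have hfi := L1.integrable_coeFn f
    have hgi := L1.integrable_coeFn g
    have e1 : ∫ x, f x * h k x ∂μ = ∫ x, (f x - g x) * h k x ∂μ + ∫ x, g x * h k x ∂μ := by
      rw [← integral_add (hi k (fun x => f x - g x) (hfi.sub hgi)) (hi k g hgi)]
      congr 1; ext x; ring
    have e2 : |∫ x, (f x - g x) * h k x ∂μ| ≤ dist f g := by
      rw [dist_eq_norm, L1.norm_eq_integral_norm, ← Real.norm_eq_abs]
      refine norm_integral_le_of_norm_le (L1.integrable_coeFn (f - g)).norm ?_
      filter_upwards [Lp.coeFn_sub f g] with x hx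
      rw [norm_mul, hx]
      exact mul_le_of_le_one_right (norm_nonneg _) (hb k x)
    rw [e1]
    calc _ ≤ _ := abs_add_le _ _
      _ < ε := by linarith
  · intro f g hfg _ h1
    refine h1.congr fun k => integral_congr_ae ?_
    filter_upwards [hfg] with x hx
    rw [hx]

lemma weak_kernel {n : ℕ} [NeZero n] {h : ℕ → Sph n → ℝ} (hm : ∀ k, Measurable (h k))
    (hb : ∀ k x, |h k x| ≤ 1)
    (hw : ∀ A, MeasurableSet A → Tendsto (fun k => ∫ x in A, h k x ∂(sphMeasure n)) atTop (nhds 0))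
    {ψ : ℝ → ℝ} (hψ : Integrable ψ (ipM n)) :
    Tendsto (fun k => ∫ p : Sph n × Sph n, ψ ⟪(p.1 : Eucl n), (p.2 : Eucl n)⟫ *
      (h k p.1 * h k p.2) ∂((sphMeasure n).prod (sphMeasure n))) atTop (nhds 0) := by
  have hΨ : Integrable (fun p : Sph n × Sph n => ψ ⟪(p.1 : Eucl n), (p.2 : Eucl n)⟫)
      ((sphMeasure n).prod (sphMeasure n)) := hψ.comp_measurable continuous_ip.measurable
  have hIntg : ∀ k, Integrable (fun p : Sph n × Sph n => ψ ⟪(p.1 : Eucl n), (p.2 : Eucl n)⟫ *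
      (h k p.1 * h k p.2)) ((sphMeasure n).prod (sphMeasure n)) := by
    intro k
    refine hΨ.mul_bdd (c := 1) ?_ (Eventually.of_forall fun p => ?_)
    · exact (((hm k).comp measurable_fst).mul ((hm k).comp measurable_snd)).aestronglyMeasurable
    · rw [Real.norm_eq_abs, abs_mul]
      exact mul_le_one₀ (hb k _) (abs_nonneg _) (hb k _)
  have e : ∀ k, ∫ p : Sph n × Sph n, ψ ⟪(p.1 : Eucl n), (p.2 : Eucl n)⟫ *
      (h k p.1 * h k p.2) ∂((sphMeasure n).prod (sphMeasure n)) =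
      ∫ x, h k x * ∫ y, ψ ⟪(x : Eucl n), (y : Eucl n)⟫ * h k y ∂(sphMeasure n)
        ∂(sphMeasure n) := by
    intro k
    rw [integral_prod _ (hIntg k)]
    congr 1; ext x
    rw [← integral_const_mul]
    congr 1; ext y; ring
  simp_rw [e]
  have hz : (0 : ℝ) = ∫ x : Sph n, (0 : ℝ) ∂(sphMeasure n) := by simp
  rw [hz]
  refine tendsto_integral_of_dominated_convergence
    (fun x => ∫ y, ‖ψ ⟪(x : Eucl n), (y : Eucl n)⟫‖ ∂(sphMeasure n)) ?_ ?_ ?_ ?_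
  · intro k
    have h1 := (hIntg k).integral_prod_left.aestronglyMeasurable
    refine h1.congr (Eventually.of_forall fun x => ?_)
    change ∫ y, ψ ⟪(x : Eucl n), (y : Eucl n)⟫ * (h k x * h k y) ∂(sphMeasure n) =
      h k x * ∫ y, ψ ⟪(x : Eucl n), (y : Eucl n)⟫ * h k y ∂(sphMeasure n)
    rw [← integral_const_mul]
    congr 1; ext y; ring
  · exact hΨ.norm.integral_prod_left
  · intro k
    filter_upwards [hΨ.prod_right_ae] with x hx
    rw [norm_mul]
    have h1 : ‖∫ y, ψ ⟪(x : Eucl n), (y : Eucl n)⟫ * h k y ∂(sphMeasure n)‖ ≤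
        ∫ y, ‖ψ ⟪(x : Eucl n), (y : Eucl n)⟫‖ ∂(sphMeasure n) := by
      refine norm_integral_le_of_norm_le hx.norm (Eventually.of_forall fun y => ?_)
      rw [norm_mul]
      exact mul_le_of_le_one_right (norm_nonneg _) (hb k y)
    calc _ ≤ 1 * _ := mul_le_mul (hb k x) h1 (norm_nonneg _) zero_le_one
      _ = _ := one_mul _
  · filter_upwards [hΨ.prod_right_ae] with x hx
    have h1 := weak_L1 hm hb hw hx
    refine squeeze_zero_norm (fun k => ?_) (tendsto_zero_iff_norm_tendsto_zero.mp h1)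
    rw [norm_mul]
    exact mul_le_of_le_one_left (norm_nonneg _) (hb k x)

/-- pair correlation -/
def pairT {n : ℕ} (h : Sph n → ℝ) (x y : Sph n) : ℝ := ∫ g, h (act g x) * h (act g y) ∂(ogM n)

lemma pair_inv {n : ℕ} (u h : Sph n → ℝ) {x y x' y' : Sph n}
    (e : ⟪(x : Eucl n), (y : Eucl n)⟫ = ⟪(x' : Eucl n), (y' : Eucl n)⟫) :
    ∫ g, u (act g x) * h (act g y) ∂(ogM n) = ∫ g, u (act g x') * h (act g y') ∂(ogM n) := by
  obtain ⟨k, rfl, rfl⟩ := exists_act_pair x y x' y' e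
  exact (integral_act_right k (fun g => u (act g x) * h (act g y))).symm

lemma exists_section {n : ℕ} (hn : 3 ≤ n) : ∃ (e : Sph n) (s : ℝ → Sph n), Measurable s ∧
    ∀ c ∈ Set.Icc (-1 : ℝ) 1, ⟪(e : Eucl n), (s c : Eucl n)⟫ = c := by
  let x : Sph n := ⟨EuclideanSpace.single ⟨0, by omega⟩ 1, by simp⟩
  let y : Sph n := ⟨EuclideanSpace.single ⟨1, by omega⟩ 1, by simp⟩
  have hxy : ⟪(x : Eucl n), (y : Eucl n)⟫ = 0 := by
    simp [x, y, EuclideanSpace.inner_single_left]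
  obtain ⟨c, hc, -, h⟩ := exists_circle hn x y hxy (by norm_num) (by norm_num)
  refine ⟨c 0, fun a => c (Real.arccos a), (hc.comp Real.continuous_arccos).measurable, ?_⟩
  intro a ha
  rw [h, zero_sub, Real.cos_neg, Real.cos_arccos ha.1 ha.2]
  ring

lemma ip_mem {n : ℕ} (x y : Sph n) : ⟪(x : Eucl n), (y : Eucl n)⟫ ∈ Set.Icc (-1 : ℝ) 1 := by
  have h := abs_real_inner_le_norm (x : Eucl n) (y : Eucl n)
  rw [norm_eq_of_mem_sphere, norm_eq_of_mem_sphere, one_mul, abs_le] at h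
  exact h

lemma exists_tau {n : ℕ} (hn : 3 ≤ n) {h : Sph n → ℝ} (hm : Measurable h)
    (hb : ∀ x, |h x| ≤ 1) :
    ∃ τ : ℝ → ℝ, Measurable τ ∧ (∀ c, |τ c| ≤ 1) ∧
      ∀ x y : Sph n, τ ⟪(x : Eucl n), (y : Eucl n)⟫ = pairT h x y := by
  obtain ⟨e, s, hs, hes⟩ := exists_section hn
  refine ⟨fun c => pairT h e (s c), ?_, ?_, ?_⟩
  · have : Measurable (fun p : ℝ × OG n => h (act p.2 e) * h (act p.2 (s p.1))) := by
      refine (hm.comp ((measurable_act_left e).comp measurable_snd)).mul (hm.comp ?_)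
      exact measurable_act.comp (measurable_snd.prodMk (hs.comp measurable_fst))
    exact (this.stronglyMeasurable.integral_prod_right (ν := ogM n)).measurable
  · intro c
    have := norm_integral_le_of_norm_le_const (μ := ogM n) (C := 1)
      (f := fun g => h (act g e) * h (act g (s c))) (Eventually.of_forall fun g => by
        rw [Real.norm_eq_abs, abs_mul]
        exact mul_le_one₀ (hb _) (abs_nonneg _) (hb _))
    simpa [pairT] using this
  · intro x y
    exact pair_inv h h (hes _ (ip_mem x y))

lemma kernel_eq {n : ℕ} [NeZero n] {h : Sph n → ℝ} (hm : Measurable h)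
    (hb : ∀ x, |h x| ≤ 1) {τ : ℝ → ℝ} (hτm : Measurable τ)
    (hτ : ∀ x y : Sph n, τ ⟪(x : Eucl n), (y : Eucl n)⟫ = pairT h x y)
    {ψ : ℝ → ℝ} (hψ : Integrable ψ (ipM n)) (hψm : Measurable ψ) :
    ∫ c, ψ c * τ c ∂(ipM n) = ∫ p : Sph n × Sph n, ψ ⟪(p.1 : Eucl n), (p.2 : Eucl n)⟫ *
      (h p.1 * h p.2) ∂((sphMeasure n).prod (sphMeasure n)) := by
  have hΨ : Integrable (fun p : Sph n × Sph n => ψ ⟪(p.1 : Eucl n), (p.2 : Eucl n)⟫)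
      ((sphMeasure n).prod (sphMeasure n)) := hψ.comp_measurable continuous_ip.measurable
  rw [ipM, integral_map continuous_ip.measurable.aemeasurable
    (f := fun c => ψ c * τ c) (hψm.mul hτm).aestronglyMeasurable]
  simp_rw [hτ, pairT, ← integral_const_mul]
  rw [integral_integral_swap]
  · have : ∀ g : OG n, ∫ p : Sph n × Sph n, ψ ⟪(p.1 : Eucl n), (p.2 : Eucl n)⟫ *
        (h (act g p.1) * h (act g p.2)) ∂((sphMeasure n).prod (sphMeasure n)) =
        ∫ p : Sph n × Sph n, ψ ⟪(p.1 : Eucl n), (p.2 : Eucl n)⟫ *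
        (h p.1 * h p.2) ∂((sphMeasure n).prod (sphMeasure n)) := by
      intro g
      have hp := (act_preserving g).prod (act_preserving g)
      conv_rhs => rw [← hp.map_eq]
      rw [integral_map hp.measurable.aemeasurable]
      · simp only [Prod.map_fst, Prod.map_snd, inner_act]
      · exact ((hψm.comp continuous_ip.measurable).mul
          ((hm.comp measurable_fst).mul (hm.comp measurable_snd))).aestronglyMeasurable
    simp_rw [this]
    simp
  · have h1 := hΨ.comp_fst (ogM n)
    refine h1.mul_bdd (c := 1) ?_ (Eventually.of_forall fun p => ?_)
    · refine Measurable.aestronglyMeasurable (Measurable.mul (hm.comp ?_) (hm.comp ?_))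
      · exact measurable_act.comp (measurable_snd.prodMk (measurable_fst.comp measurable_fst))
      · exact measurable_act.comp (measurable_snd.prodMk (measurable_snd.comp measurable_fst))
    · rw [Real.norm_eq_abs, abs_mul]
      exact mul_le_one₀ (hb _) (abs_nonneg _) (hb _)


lemma integrable_of_bdd {α : Type*} [MeasurableSpace α] {μ : Measure α} [IsFiniteMeasure μ]
    {f : α → ℝ} (hf : Measurable f) (hb : ∀ x, |f x| ≤ 1) : Integrable f μ :=
  Integrable.of_bound hf.aestronglyMeasurable 1 (Eventually.of_forall hb)

lemma abs_mul_le_one' {a b : ℝ} (ha : |a| ≤ 1) (hb : |b| ≤ 1) : |a * b| ≤ 1 := by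
  rw [abs_mul]; exact mul_le_one₀ ha (abs_nonneg _) hb

lemma cs_bound {n : ℕ} {u h : Sph n → ℝ} (hum : Measurable u) (hm : Measurable h)
    (hub : ∀ x, |u x| ≤ 1) (hb : ∀ x, |h x| ≤ 1) {x y : Sph n} {t : ℝ}
    (hxy : ⟪(x : Eucl n), (y : Eucl n)⟫ = t) {c : ℝ → Sph n} (hc : Continuous c)
    (hxc : ∀ b, ⟪(x : Eucl n), (c b : Eucl n)⟫ = t) :
    (∫ g, u (act g x) * h (act g y) ∂(ogM n)) ^ 2 ≤
      ∫ p : ℝ × ℝ, pairT h (c p.1) (c p.2) ∂(uM.prod uM) := by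
  have hhc : Measurable (fun p : OG n × ℝ => h (act p.1 (c p.2))) :=
    hm.comp (measurable_act.comp (measurable_fst.prodMk (hc.measurable.comp measurable_snd)))
  have hux : Measurable (fun g : OG n => u (act g x)) := hum.comp (measurable_act_left x)
  let H : OG n → ℝ := fun g => ∫ b, h (act g (c b)) ∂uM
  have hHm : Measurable H := (hhc.stronglyMeasurable.integral_prod_right (ν := uM)).measurable
  have hHb : ∀ g, |H g| ≤ 1 := by
    intro g
    have := norm_integral_le_of_norm_le_const (μ := uM) (C := 1)
      (f := fun b => h (act g (c b))) (Eventually.of_forall fun b => hb _)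
    simpa [H] using this
  set m : ℝ := ∫ g, u (act g x) * h (act g y) ∂(ogM n) with hmdef
  have h1 : m = ∫ g, u (act g x) * H g ∂(ogM n) := by
    have e1 : ∀ b, ∫ g, u (act g x) * h (act g (c b)) ∂(ogM n) = m := fun b =>
      pair_inv u h (by rw [hxc, hxy])
    have e2 : ∫ b, ∫ g, u (act g x) * h (act g (c b)) ∂(ogM n) ∂uM = m := by
      simp_rw [e1]; simp
    rw [← e2, integral_integral_swap]
    · simp_rw [integral_const_mul]; rfl
    · refine integrable_of_bdd ?_ fun p => abs_mul_le_one' (hub _) (hb _)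
      exact (hux.comp measurable_snd).mul (hhc.comp measurable_swap)
  have h2 : m ^ 2 ≤ ∫ g, H g ^ 2 ∂(ogM n) := by
    have i1 : Integrable (fun g => u (act g x) * H g) (ogM n) :=
      integrable_of_bdd (hux.mul hHm) fun g => abs_mul_le_one' (hub _) (hHb g)
    have i2 : Integrable (fun g => (u (act g x) * H g) ^ 2) (ogM n) :=
      integrable_of_bdd ((hux.mul hHm).pow_const 2) fun g => by
        rw [sq]
        exact abs_mul_le_one' (abs_mul_le_one' (hub _) (hHb g)) (abs_mul_le_one' (hub _) (hHb g))
    have i3 : Integrable (fun g => H g ^ 2) (ogM n) :=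
      integrable_of_bdd (hHm.pow_const 2) fun g => by
        rw [sq]; exact abs_mul_le_one' (hHb g) (hHb g)
    have e3 : 0 ≤ ∫ g, (u (act g x) * H g - m) ^ 2 ∂(ogM n) := integral_nonneg fun g => sq_nonneg _
    have e4 : ∫ g, (u (act g x) * H g - m) ^ 2 ∂(ogM n) =
        ∫ g, (u (act g x) * H g) ^ 2 ∂(ogM n) - m ^ 2 := by
      have : ∀ g, (u (act g x) * H g - m) ^ 2 =
          (u (act g x) * H g) ^ 2 - (2 * m) * (u (act g x) * H g) + m ^ 2 := fun g => by ring
      simp_rw [this]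
      have i4 : Integrable (fun g => (u (act g x) * H g) ^ 2 - (2 * m) * (u (act g x) * H g))
        (ogM n) := i2.sub (i1.const_mul _)
      rw [integral_add i4 (integrable_const _),
        integral_sub i2 (i1.const_mul _), integral_const_mul, ← h1]
      simp
      ring
    have e5 : ∫ g, (u (act g x) * H g) ^ 2 ∂(ogM n) ≤ ∫ g, H g ^ 2 ∂(ogM n) := by
      refine integral_mono i2 i3 fun g => ?_
      change (u (act g x) * H g) ^ 2 ≤ H g ^ 2
      rw [mul_pow]
      exact mul_le_of_le_one_left (sq_nonneg _) ((sq_le_one_iff_abs_le_one _).mpr (hub _))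
    linarith
  refine h2.trans (le_of_eq ?_)
  have e6 : ∀ g, H g ^ 2 = ∫ p : ℝ × ℝ, h (act g (c p.1)) * h (act g (c p.2)) ∂(uM.prod uM) := by
    intro g
    rw [sq, integral_prod_mul (fun b => h (act g (c b))) (fun b => h (act g (c b)))]
  simp_rw [e6, pairT]
  rw [integral_integral_swap]
  refine integrable_of_bdd (Measurable.mul ?_ ?_) fun p => abs_mul_le_one' (hb _) (hb _)
  · exact hhc.comp (measurable_fst.prodMk (measurable_fst.comp measurable_snd))
  · exact hhc.comp (measurable_fst.prodMk (measurable_snd.comp measurable_snd))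

lemma weak_pair {n : ℕ} (hn : 3 ≤ n) {h u : ℕ → Sph n → ℝ} (hm : ∀ k, Measurable (h k))
    (hb : ∀ k x, |h k x| ≤ 1) (hum : ∀ k, Measurable (u k)) (hub : ∀ k x, |u k x| ≤ 1)
    (hw : ∀ A, MeasurableSet A → Tendsto (fun k => ∫ x in A, h k x ∂(sphMeasure n)) atTop (nhds 0))
    {x y : Sph n} {t : ℝ} (hxy : ⟪(x : Eucl n), (y : Eucl n)⟫ = t) (ht : -1 < t) (ht' : t < 1) :
    Tendsto (fun k => ∫ g, u k (act g x) * h k (act g y) ∂(ogM n)) atTop (nhds 0) := by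
  have : NeZero n := ⟨by omega⟩
  obtain ⟨c, hc, hxc, hcc⟩ := exists_circle hn x y hxy ht ht'
  choose τ hτm hτb hτ using fun k => exists_tau hn (hm k) (hb k)
  have : IsProbabilityMeasure (ipM n) :=
    Measure.isProbabilityMeasure_map continuous_ip.measurable.aemeasurable
  let q : ℝ × ℝ → ℝ := fun p => t ^ 2 + (1 - t ^ 2) * Real.cos (p.1 - p.2)
  have hq : Measurable q := by fun_prop
  let κ : Measure ℝ := (uM.prod uM).map q
  have : IsProbabilityMeasure κ := Measure.isProbabilityMeasure_map hq.aemeasurable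
  have hac : κ ≪ ipM n := law_ac (by omega) ht ht'
  have h1 : ∀ k, ∫ p : ℝ × ℝ, pairT (h k) (c p.1) (c p.2) ∂(uM.prod uM) =
      ∫ a, (κ.rnDeriv (ipM n) a).toReal * τ k a ∂(ipM n) := by
    intro k
    have e1 : ∫ a, (κ.rnDeriv (ipM n) a).toReal * τ k a ∂(ipM n) = ∫ a, τ k a ∂κ :=
      integral_rnDeriv_smul hac
    rw [e1, integral_map hq.aemeasurable (hτm k).aestronglyMeasurable]
    congr 1; ext p
    rw [← hτ k, hcc]
  have h2 : Tendsto (fun k => ∫ p : ℝ × ℝ, pairT (h k) (c p.1) (c p.2) ∂(uM.prod uM))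
      atTop (nhds 0) := by
    simp_rw [h1]
    have hi : Integrable (fun a => (κ.rnDeriv (ipM n) a).toReal) (ipM n) :=
      Measure.integrable_toReal_rnDeriv
    have := weak_kernel hm hb hw hi
    refine this.congr fun k => ?_
    exact (kernel_eq (hm k) (hb k) (hτm k) (hτ k) hi
      (Measure.measurable_rnDeriv _ _).ennreal_toReal).symm
  have h3 : Tendsto (fun k => (∫ g, u k (act g x) * h k (act g y) ∂(ogM n)) ^ 2) atTop (nhds 0) :=
    squeeze_zero (fun k => sq_nonneg _)
      (fun k => cs_bound (hum k) (hm k) (hub k) (hb k) hxy hc hxc) h2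
  have h4 := h3.sqrt
  simp_rw [Real.sqrt_sq_eq_abs, Real.sqrt_zero] at h4
  exact (tendsto_zero_iff_abs_tendsto_zero _).mpr h4

lemma limit_avoid {n : ℕ} (hn : 3 ≤ n) {F : ℕ → Sph n → ℝ} {f : Sph n → ℝ}
    (hFm : ∀ k, Measurable (F k)) (hF : ∀ k x, F k x ∈ Set.Icc (0 : ℝ) 1)
    (hfm : Measurable f) (hf : ∀ x, f x ∈ Set.Icc (0 : ℝ) 1)
    (hw : ∀ A, MeasurableSet A → Tendsto (fun k => ∫ x in A, F k x ∂(sphMeasure n)) atTop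
      (nhds (∫ x in A, f x ∂(sphMeasure n))))
    {x y : Sph n} {t : ℝ} (hxy : ⟪(x : Eucl n), (y : Eucl n)⟫ = t) (ht : -1 < t) (ht' : t < 1)
    (hav : ∀ k (g : OG n), F k (act g x) * F k (act g y) = 0) :
    ∀ᵐ g ∂(ogM n), ¬ (act g x ∈ {z | 0 < f z} ∧ act g y ∈ {z | 0 < f z}) := by
  have : NeZero n := ⟨by omega⟩
  have hFb : ∀ k x, |F k x| ≤ 1 := fun k x => abs_le.mpr ⟨by linarith [(hF k x).1], (hF k x).2⟩
  have hfb : ∀ x, |f x| ≤ 1 := fun x => abs_le.mpr ⟨by linarith [(hf x).1], (hf x).2⟩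
  let h : ℕ → Sph n → ℝ := fun k x => F k x - f x
  have hm : ∀ k, Measurable (h k) := fun k => (hFm k).sub hfm
  have hb : ∀ k x, |h k x| ≤ 1 := fun k x => abs_le.mpr
    ⟨by linarith [(hF k x).1, (hf x).2], by linarith [(hF k x).2, (hf x).1]⟩
  have hw' : ∀ A, MeasurableSet A →
      Tendsto (fun k => ∫ x in A, h k x ∂(sphMeasure n)) atTop (nhds 0) := by
    intro A hA
    have e : ∀ k, ∫ x in A, h k x ∂(sphMeasure n) =
        ∫ x in A, F k x ∂(sphMeasure n) - ∫ x in A, f x ∂(sphMeasure n) := fun k =>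
      integral_sub (integrable_of_bdd (hFm k) (hFb k)) (integrable_of_bdd hfm hfb)
    simp_rw [e]
    simpa using (hw A hA).sub_const (∫ x in A, f x ∂(sphMeasure n))
  have t1 := weak_pair hn hm hb hFm hFb hw' hxy ht ht'
  have hyx : ⟪(y : Eucl n), (x : Eucl n)⟫ = t := by rw [real_inner_comm, hxy]
  have t2 := weak_pair hn hm hb (fun _ => hfm) (fun _ => hfb) hw' hyx ht ht'
  have mx : ∀ {φ : Sph n → ℝ}, Measurable φ → ∀ z, Measurable (fun g => φ (act g z)) :=
    fun hφ z => hφ.comp (measurable_act_left z)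
  have hfi : Integrable (fun g => f (act g x) * f (act g y)) (ogM n) :=
    integrable_of_bdd ((mx hfm x).mul (mx hfm y)) fun g => abs_mul_le_one' (hfb _) (hfb _)
  have e : ∀ k, ∫ g, F k (act g x) * h k (act g y) ∂(ogM n) +
      ∫ g, f (act g y) * h k (act g x) ∂(ogM n) = - ∫ g, f (act g x) * f (act g y) ∂(ogM n) := by
    intro k
    rw [← integral_add, ← integral_neg]
    · congr 1; ext g
      have := hav k g
      simp only [h]
      linear_combination this
    · exact integrable_of_bdd ((mx (hFm k) x).mul (mx (hm k) y))
        fun g => abs_mul_le_one' (hFb _ _) (hb _ _)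
    · exact integrable_of_bdd ((mx hfm y).mul (mx (hm k) x))
        fun g => abs_mul_le_one' (hfb _) (hb _ _)
  have t3 := t1.add t2
  simp_rw [e] at t3
  have t4 := tendsto_nhds_unique t3 tendsto_const_nhds
  have hz : ∫ g, f (act g x) * f (act g y) ∂(ogM n) = 0 := by linarith
  rw [integral_eq_zero_iff_of_nonneg (fun g => mul_nonneg (hf _).1 (hf _).1) hfi] at hz
  filter_upwards [hz] with g hg
  rintro ⟨ha, hb⟩
  exact (mul_pos ha hb).ne' hg


lemma weak_compact {α : Type*} [MeasurableSpace α] [MeasurableSpace.CountablyGenerated α]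
    {μ : Measure α} [IsProbabilityMeasure μ] {F : ℕ → α → ℝ}
    (hFm : ∀ k, Measurable (F k)) (hF : ∀ k x, F k x ∈ Set.Icc (0 : ℝ) 1) :
    ∃ (f : α → ℝ) (φ : ℕ → ℕ), StrictMono φ ∧ Measurable f ∧ (∀ x, f x ∈ Set.Icc (0 : ℝ) 1) ∧
      ∀ A, MeasurableSet A → Tendsto (fun k => ∫ x in A, F (φ k) x ∂μ) atTop
        (nhds (∫ x in A, f x ∂μ)) := by
  have hFb : ∀ k x, |F k x| ≤ 1 := fun k x => abs_le.mpr ⟨by linarith [(hF k x).1], (hF k x).2⟩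
  have hmem : ∀ k, MemLp (F k) 2 μ := fun k =>
    MemLp.of_bound (hFm k).aestronglyMeasurable 1 (Eventually.of_forall (hFb k))
  let v : ℕ → Lp ℝ 2 μ := fun k => (hmem k).toLp (F k)
  have hv : ∀ k, ‖v k‖ ≤ 1 := by
    intro k
    have h1 := Lp.norm_le_of_ae_bound (p := 2) (f := v k) (C := 1) zero_le_one (by
      filter_upwards [(hmem k).coeFn_toLp] with x hx
      rw [hx]; exact hFb k x)
    have hμ1 : measureUnivNNReal μ = 1 := by
      rw [← ENNReal.coe_inj, coe_measureUnivNNReal, measure_univ, ENNReal.coe_one]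
    simpa [hμ1] using h1
  have : Fact ((2 : ℝ≥0∞) ≠ ∞) := ⟨by simp⟩
  let L : ℕ → WeakDual ℝ (Lp ℝ 2 μ) := fun k =>
    StrongDual.toWeakDual (InnerProductSpace.toDual ℝ (Lp ℝ 2 μ) (v k))
  have hL : ∀ k, L k ∈ WeakDual.toStrongDual ⁻¹' closedBall (0 : StrongDual ℝ (Lp ℝ 2 μ)) 1 := by
    intro k
    rw [Set.mem_preimage, mem_closedBall_zero_iff]
    change ‖InnerProductSpace.toDual ℝ (Lp ℝ 2 μ) (v k)‖ ≤ 1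
    rw [LinearIsometryEquiv.norm_map]
    exact hv k
  obtain ⟨ℓ, -, φ, hφ, hlim⟩ := WeakDual.isSeqCompact_closedBall ℝ (Lp ℝ 2 μ) 0 1 hL
  let f0 : Lp ℝ 2 μ := (InnerProductSpace.toDual ℝ (Lp ℝ 2 μ)).symm (WeakDual.toStrongDual ℓ)
  have hconv : ∀ w : Lp ℝ 2 μ, Tendsto (fun k => ⟪v (φ k), w⟫) atTop (nhds ⟪f0, w⟫) := by
    intro w
    have h1 := ((WeakDual.eval_continuous w).tendsto ℓ).comp hlim
    have h2 : ⟪f0, w⟫ = ℓ w := InnerProductSpace.toDual_symm_apply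
    rw [h2]
    exact h1
  have hset : ∀ A, MeasurableSet A → Tendsto (fun k => ∫ x in A, F (φ k) x ∂μ) atTop
        (nhds (∫ x in A, f0 x ∂μ)) := by
    intro A hA
    have h1 := hconv (indicatorConstLp 2 hA (measure_ne_top μ A) (1 : ℝ))
    have h2 : ∀ z : Lp ℝ 2 μ, ⟪z, indicatorConstLp 2 hA (measure_ne_top μ A) (1 : ℝ)⟫ =
        ∫ x in A, z x ∂μ := by
      intro z
      rw [real_inner_comm]
      exact L2.inner_indicatorConstLp_one hA (measure_ne_top μ A) z
    simp_rw [h2] at h1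
    refine h1.congr fun k => ?_
    exact integral_congr_ae (ae_restrict_of_ae (hmem (φ k)).coeFn_toLp)
  have hf0i : Integrable f0 μ := (Lp.memLp f0).integrable (by norm_num)
  have hFi : ∀ k, Integrable (F k) μ := fun k => integrable_of_bdd (hFm k) (hFb k)
  have hle1 : f0 ≤ᵐ[μ] fun _ => (1 : ℝ) := by
    refine ae_le_of_forall_setIntegral_le hf0i (integrable_const _) fun A hA _ => ?_
    refine le_of_tendsto' (hset A hA) fun k => ?_
    exact integral_mono (hFi _).integrableOn (integrable_const _) fun x => (hF _ x).2
  have hge0 : (fun _ => (0 : ℝ)) ≤ᵐ[μ] f0 := by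
    refine ae_le_of_forall_setIntegral_le (integrable_const _) hf0i fun A hA _ => ?_
    refine ge_of_tendsto' (hset A hA) fun k => ?_
    exact integral_mono (integrable_const _) (hFi _).integrableOn fun x => (hF _ x).1
  refine ⟨fun x => max 0 (min 1 (f0 x)), φ, hφ, ?_, ?_, ?_⟩
  · exact measurable_const.max (measurable_const.min (Lp.stronglyMeasurable f0).measurable)
  · intro x
    exact ⟨le_max_left _ _, max_le zero_le_one (min_le_left _ _)⟩
  · intro A hA
    have : ∫ x in A, max 0 (min 1 (f0 x)) ∂μ = ∫ x in A, f0 x ∂μ := by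
      refine integral_congr_ae (ae_restrict_of_ae ?_)
      filter_upwards [hle1, hge0] with x h1 h2
      rw [min_eq_right h1, max_eq_right h2]
    rw [this]
    exact hset A hA

/-- The antipodal map. -/
def anti {n : ℕ} (x : Sph n) : Sph n := -x

lemma anti_preserving {n : ℕ} : MeasurePreserving (anti (n := n)) (sphMeasure n) (sphMeasure n) :=
  act_preserving (-1 : OG n)

/-- A measurable choice of one point in every antipodal pair. -/
def halfS (n : ℕ) : Set (Sph n) :=
  ⋃ i : Fin n, {x | 0 < (x : Eucl n) i ∧ ∀ j < i, (x : Eucl n) j = 0}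

lemma halfS_meas (n : ℕ) : MeasurableSet (halfS n) := by
  have hc : ∀ j : Fin n, Measurable (fun x : Sph n => (x : Eucl n) j) := fun j => by
    have : Continuous (fun x : Sph n => (x : Eucl n) j) := by fun_prop
    exact this.measurable
  refine MeasurableSet.iUnion fun i => ?_
  refine (measurableSet_lt measurable_const (hc i)).inter ?_
  have : {x : Sph n | ∀ j < i, (x : Eucl n) j = 0} =
      ⋂ j : Fin n, ⋂ _ : j < i, ({x : Sph n | (x : Eucl n) j = 0} : Set (Sph n)) := by
    ext x
    simp only [Set.mem_ofPred_eq, Set.mem_iInter]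
  change MeasurableSet {x : Sph n | ∀ j < i, (x : Eucl n) j = 0}
  rw [this]
  exact MeasurableSet.iInter fun j => MeasurableSet.iInter fun _ =>
    measurableSet_eq_fun (hc j) measurable_const

lemma anti_coe {n : ℕ} (x : Sph n) (i : Fin n) : (anti x : Eucl n) i = -(x : Eucl n) i := rfl

lemma halfS_or {n : ℕ} (x : Sph n) : x ∈ halfS n ∨ anti x ∈ halfS n := by
  have hx : ∃ i, (x : Eucl n) i ≠ 0 := by
    by_contra! h
    have h0 : (x : Eucl n) = 0 := by ext i; exact h i
    have := norm_eq_of_mem_sphere x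
    rw [h0] at this
    simp at this
  classical
  let s : Finset (Fin n) := Finset.univ.filter fun i => (x : Eucl n) i ≠ 0
  have hs : s.Nonempty := by
    obtain ⟨i, hi⟩ := hx
    exact ⟨i, by simp [s, hi]⟩
  set i := s.min' hs
  have hi : (x : Eucl n) i ≠ 0 := (Finset.mem_filter.mp (s.min'_mem hs)).2
  have hj : ∀ j < i, (x : Eucl n) j = 0 := by
    intro j hj
    by_contra hc
    exact absurd (s.min'_le j (by simp [s, hc])) (not_le.mpr hj)
  rcases lt_or_gt_of_ne hi with h | h
  · refine Or.inr (Set.mem_iUnion.mpr ⟨i, ?_, fun j hj' => ?_⟩)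
    · rw [anti_coe]; linarith
    · rw [anti_coe, hj j hj', neg_zero]
  · exact Or.inl (Set.mem_iUnion.mpr ⟨i, h, hj⟩)

lemma halfS_not {n : ℕ} (x : Sph n) (h1 : x ∈ halfS n) (h2 : anti x ∈ halfS n) : False := by
  obtain ⟨i, hi, hi'⟩ := Set.mem_iUnion.mp h1
  obtain ⟨j, hj, hj'⟩ := Set.mem_iUnion.mp h2
  rw [anti_coe] at hj
  rcases lt_trichotomy i j with h | h | h
  · have := hj' i h
    rw [anti_coe] at this
    linarith
  · rw [h] at hi; linarith
  · have := hi' j h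
    linarith

lemma anti_of_ip {n : ℕ} {x y : Sph n} (h : ⟪(x : Eucl n), (y : Eucl n)⟫ = -1) : y = anti x := by
  apply Subtype.ext
  change (y : Eucl n) = -(x : Eucl n)
  have h1 : ⟪-(x : Eucl n), (y : Eucl n)⟫ = 1 := by rw [inner_neg_left, h, neg_neg]
  have := (inner_eq_one_iff_of_norm_eq_one (𝕜 := ℝ) (x := -(x : Eucl n)) (y := (y : Eucl n))
    (by rw [norm_neg, norm_eq_of_mem_sphere]) (norm_eq_of_mem_sphere y)).mp h1
  exact this.symm

lemma ip_anti {n : ℕ} (x : Sph n) : ⟪(x : Eucl n), (anti x : Eucl n)⟫ = -1 := by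
  change ⟪(x : Eucl n), -(x : Eucl n)⟫ = -1
  rw [inner_neg_right, real_inner_self_eq_norm_sq, norm_eq_of_mem_sphere]
  norm_num

lemma ip_self {n : ℕ} (x : Sph n) : ⟪(x : Eucl n), (x : Eucl n)⟫ = 1 := by
  rw [real_inner_self_eq_norm_sq, norm_eq_of_mem_sphere]
  norm_num

lemma eq_of_ip {n : ℕ} {x y : Sph n} (h : ⟪(x : Eucl n), (y : Eucl n)⟫ = 1) : x = y :=
  Subtype.ext ((inner_eq_one_iff_of_norm_eq_one (𝕜 := ℝ)
    (norm_eq_of_mem_sphere x) (norm_eq_of_mem_sphere y)).mp h)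

lemma exists_max_seq {n : ℕ} (hn : 3 ≤ n) (X : Set ℝ) (h1 : (1 : ℝ) ∉ X) {J : ℕ → Set (Sph n)}
    (hJ : ∀ k, MeasurableSet (J k)) (hJX : ∀ k, Avoids X (J k)) {a : ℝ}
    (ha : Tendsto (fun k => (sphMeasure n).real (J k)) atTop (nhds a)) :
    ∃ I : Set (Sph n), MeasurableSet I ∧ Avoids X I ∧ a ≤ (sphMeasure n).real I := by
  have : NeZero n := ⟨by omega⟩
  let F : ℕ → Sph n → ℝ := fun k => (J k).indicator fun _ => 1
  have hFm : ∀ k, Measurable (F k) := fun k => measurable_const.indicator (hJ k)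
  have hF : ∀ k x, F k x ∈ Set.Icc (0 : ℝ) 1 := by
    intro k x
    by_cases hx : x ∈ J k <;> simp [F, hx]
  obtain ⟨f, φ, hφ, hfm, hf, hw⟩ := weak_compact (μ := sphMeasure n) hFm hF
  have hfb : ∀ x, |f x| ≤ 1 := fun x => abs_le.mpr ⟨by linarith [(hf x).1], (hf x).2⟩
  have hfi : Integrable f (sphMeasure n) := integrable_of_bdd hfm hfb
  have hfa : ∫ x, f x ∂(sphMeasure n) = a := by
    have h2 := hw Set.univ MeasurableSet.univ
    simp only [Measure.restrict_univ] at h2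
    refine tendsto_nhds_unique h2 ((ha.comp hφ.tendsto_atTop).congr fun k => ?_)
    simp [F, integral_indicator (hJ _), Function.comp]
  have hP : MeasurableSet {z | 0 < f z} := measurableSet_lt measurable_const hfm
  obtain ⟨K, hKP, hKm, hK0, hK⟩ := density_set hP
  have hKav : ∀ x ∈ K, ∀ y ∈ K, ∀ t ∈ X, ⟪(x : Eucl n), (y : Eucl n)⟫ = t → t = -1 := by
    intro x hx y hy t ht hxy
    by_contra htm
    have hmem := ip_mem x y
    rw [hxy] at hmem
    have hl : -1 < t := lt_of_le_of_ne hmem.1 (Ne.symm htm)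
    have hr : t < 1 := lt_of_le_of_ne hmem.2 (by rintro rfl; exact h1 ht)
    refine hK x hx y hy (limit_avoid hn (fun k => hFm (φ k)) (fun k => hF (φ k)) hfm hf hw
      hxy hl hr ?_)
    intro k g
    by_cases hgx : act g x ∈ J (φ k)
    · by_cases hgy : act g y ∈ J (φ k)
      · exfalso
        refine hJX _ _ hgx _ hgy ?_
        rw [inner_act, hxy]; exact ht
      · simp [F, hgy]
    · simp [F, hgx]
  have hfK : ∀ᵐ x ∂(sphMeasure n), x ∉ K → f x = 0 := by
    filter_upwards [measure_eq_zero_iff_ae_notMem.mp hK0] with x hx hxK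
    by_contra hne
    exact hx ⟨lt_of_le_of_ne (hf x).1 (Ne.symm hne), hxK⟩
  by_cases hm1 : (-1 : ℝ) ∈ X
  · have hanti : Measurable (anti (n := n)) := anti_preserving.measurable
    let I : Set (Sph n) := {x | x ∈ K ∧ (anti x ∉ K ∨ x ∈ halfS n)}
    have hIm : MeasurableSet I := hKm.inter ((hanti hKm.compl).union (halfS_meas n))
    have haa : ∀ x : Sph n, anti (anti x) = x := fun x => neg_neg x
    refine ⟨I, hIm, ?_, ?_⟩
    · rintro x ⟨hx, hx'⟩ y ⟨hy, hy'⟩ hxy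
      have e := hKav x hx y hy _ hxy rfl
      have e2 := anti_of_ip e
      rw [e2] at hy hy'
      rw [haa] at hy'
      rcases hx' with hx' | hx'
      · exact hx' hy
      · rcases hy' with hy' | hy'
        · exact hy' hx
        · exact halfS_not x hx' hy'
    · have hfi' : Integrable (fun x => f (anti x)) (sphMeasure n) :=
        integrable_of_bdd (hfm.comp hanti) fun x => hfb _
      have iF : ∀ k, Integrable (F k) (sphMeasure n) := fun k => integrable_of_bdd (hFm k)
        fun x => abs_le.mpr ⟨by linarith [(hF k x).1], (hF k x).2⟩
      have iF' : ∀ k, Integrable (fun x => F k (anti x)) (sphMeasure n) := fun k =>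
        anti_preserving.integrable_comp_of_integrable (iF k)
      have hemb : MeasurableEmbedding (anti (n := n)) :=
        (Homeomorph.neg (Sph n)).measurableEmbedding
      have hset : ∀ (u : Sph n → ℝ) (A : Set (Sph n)),
          ∫ x in A, u (anti x) ∂(sphMeasure n) = ∫ x in anti ⁻¹' A, u x ∂(sphMeasure n) := by
        intro u A
        have h3 := anti_preserving.setIntegral_preimage_emb hemb u (anti ⁻¹' A)
        have h4 : anti ⁻¹' (anti ⁻¹' A) = A := by ext x; simp [haa]
        rw [h4] at h3
        exact h3
      have hsum : ∀ᵐ x ∂(sphMeasure n), f x + f (anti x) ≤ 1 := by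
        refine ae_le_of_forall_setIntegral_le (f := fun x => f x + f (anti x))
          (g := fun _ => (1 : ℝ)) (hfi.add hfi') (integrable_const _) fun A hA _ => ?_
        rw [integral_add hfi.integrableOn hfi'.integrableOn, hset]
        refine le_of_tendsto' ((hw A hA).add (hw _ (hanti hA))) fun k => ?_
        rw [← hset, ← integral_add (iF _).integrableOn (iF' _).integrableOn]
        refine integral_mono ((iF _).add (iF' _)).integrableOn (integrable_const _) fun x => ?_
        change F (φ k) x + F (φ k) (anti x) ≤ 1
        by_cases hx : x ∈ J (φ k)
        · have : anti x ∉ J (φ k) := fun hx' =>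
            hJX _ _ hx _ hx' (by rw [ip_anti]; exact hm1)
          simp [F, this, hx]
        · simp only [F, Set.indicator_of_notMem hx, zero_add]
          exact (hF (φ k) (anti x)).2
      have hfK' : ∀ᵐ x ∂(sphMeasure n), anti x ∉ K → f (anti x) = 0 :=
        anti_preserving.quasiMeasurePreserving.ae hfK
      let G : Sph n → ℝ := I.indicator fun _ => 1
      have hGm : Measurable G := measurable_const.indicator hIm
      have hG0 : ∀ x, 0 ≤ G x := fun x => Set.indicator_nonneg (fun _ _ => zero_le_one) x
      have hG1 : ∀ x, G x ≤ 1 := fun x => Set.indicator_le' (fun _ _ => le_rfl)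
        (fun _ _ => zero_le_one) x
      have iG : Integrable G (sphMeasure n) := integrable_of_bdd hGm fun x =>
        abs_le.mpr ⟨by linarith [hG0 x], hG1 x⟩
      have iG' : Integrable (fun x => G (anti x)) (sphMeasure n) :=
        anti_preserving.integrable_comp_of_integrable iG
      have hle : ∫ x, (f x + f (anti x)) ∂(sphMeasure n) ≤
          ∫ x, (G x + G (anti x)) ∂(sphMeasure n) := by
        refine integral_mono_ae (hfi.add hfi') (iG.add iG') ?_
        filter_upwards [hsum, hfK, hfK'] with x hx1 hx2 hx3
        change f x + f (anti x) ≤ G x + G (anti x)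
        by_cases hxK : x ∈ K
        · have : 1 ≤ G x + G (anti x) := by
            by_cases hxa : anti x ∈ K
            · rcases halfS_or x with hh | hh
              · have : x ∈ I := ⟨hxK, Or.inr hh⟩
                have e : G x = 1 := Set.indicator_of_mem this _
                linarith [hG0 (anti x)]
              · have : anti x ∈ I := ⟨hxa, Or.inr hh⟩
                have e : G (anti x) = 1 := Set.indicator_of_mem this _
                linarith [hG0 x]
            · have : x ∈ I := ⟨hxK, Or.inl hxa⟩
              have e : G x = 1 := Set.indicator_of_mem this _
              linarith [hG0 (anti x)]
          linarith
        · rw [hx2 hxK, zero_add]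
          by_cases hxa : anti x ∈ K
          · have : anti x ∈ I := ⟨hxa, Or.inl (by rw [haa]; exact hxK)⟩
            have e : G (anti x) = 1 := Set.indicator_of_mem this _
            linarith [hG0 x, (hf (anti x)).2]
          · rw [hx3 hxa]
            linarith [hG0 x, hG0 (anti x)]
      rw [integral_add hfi hfi', integral_add iG iG', anti_preserving.integral_comp hemb,
        anti_preserving.integral_comp hemb] at hle
      have hGI : ∫ x, G x ∂(sphMeasure n) = (sphMeasure n).real I := by
        simp [G, integral_indicator hIm]
      rw [← hGI, ← hfa]
      linarith
  · refine ⟨K, hKm, ?_, ?_⟩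
    · intro x hx y hy hxy
      have e := hKav x hx y hy _ hxy rfl
      rw [e] at hxy
      exact hm1 hxy
    · have e1 : (sphMeasure n).real K = ∫ x, K.indicator (fun _ => (1 : ℝ)) x ∂(sphMeasure n) := by
        simp [integral_indicator hKm]
      rw [← hfa, e1]
      refine integral_mono_ae hfi ((integrable_const _).indicator hKm) ?_
      filter_upwards [hfK] with x hx
      by_cases hxK : x ∈ K
      · rw [Set.indicator_of_mem hxK]; exact (hf x).2
      · rw [Set.indicator_of_notMem hxK, hx hxK]


/-- **Theorem (existence of a maximiser).** Let `n ≥ 3` and let `X` be an arbitrary subset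
of `[-1,1]`. Then there exists a measurable `X`-avoiding set `I ⊆ S^{n-1}` of maximum
measure: `λ(J) ≤ λ(I)` for every measurable `X`-avoiding set `J`. -/
theorem exists_maximal_avoiding {n : ℕ} (hn : 3 ≤ n) (X : Set ℝ)
    (hX : X ⊆ Set.Icc (-1 : ℝ) 1) :
    ∃ I : Set (Sph n), MeasurableSet I ∧ Avoids X I ∧
      ∀ J : Set (Sph n), MeasurableSet J → Avoids X J →
        sphMeasure n J ≤ sphMeasure n I := by

  have : NeZero n := ⟨by omega⟩
  by_cases h1 : (1 : ℝ) ∈ X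
  · refine ⟨∅, MeasurableSet.empty, fun ξ hξ => hξ.elim, fun J _ hJ => ?_⟩
    have : J = ∅ := by
      rw [Set.eq_empty_iff_forall_notMem]
      intro x hx
      exact hJ x hx x hx (by rw [ip_self]; exact h1)
    rw [this]
  · let V : Set ℝ := {r | ∃ J : Set (Sph n), MeasurableSet J ∧ Avoids X J ∧
      (sphMeasure n).real J = r}
    have hVn : V.Nonempty := ⟨_, ∅, MeasurableSet.empty, fun ξ hξ => hξ.elim, rfl⟩
    have hVb : BddAbove V := ⟨1, by rintro r ⟨J, -, -, rfl⟩; exact measureReal_le_one⟩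
    obtain ⟨u, -, hu, huV⟩ := exists_seq_tendsto_sSup hVn hVb
    choose J hJm hJX hJ using huV
    obtain ⟨I, hIm, hIX, hI⟩ := exists_max_seq hn X h1 hJm hJX (a := sSup V) (by
      simp_rw [hJ]; exact hu)
    refine ⟨I, hIm, hIX, fun A hA hAX => ?_⟩
    have h2 : (sphMeasure n).real A ≤ (sphMeasure n).real I :=
      (le_csSup hVb ⟨A, hA, hAX, rfl⟩).trans hI
    exact (ENNReal.toReal_le_toReal (measure_ne_top _ _) (measure_ne_top _ _)).mp h2
end
end
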